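/- arXiv:1311.1538 — 7 statements merged into one kernel-verified Lean document; each statement's English description precedes it below -/
import Mathlib

section
/- Let F be an algebraically closed field of characteristic 0 and let f₁, …, f_r ∈ F⟨X⟩. If the equations tr(f₁(A)) = … = tr(f_r(A)) = 0 have no common solution A ∈ Mₙ(F)^g for any n ∈ ℕ, then there exist scalars λ₁, …, λ_r ∈ F such that λ₁f₁ + ⋯ + λ_rf_r is cyclically equivalent to 1. -/
/-- Two free noncommutative polynomials are cyclically equivalent if their difference
lies in the `F`-linear span of commutators `p * q - q * p`. -/
def CycEq {F : Type*} [Field F] {g : ℕ} (f h : FreeAlgebra F (Fin g)) : Prop :=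
  f - h ∈ Submodule.span F
    {x : FreeAlgebra F (Fin g) | ∃ p q : FreeAlgebra F (Fin g), x = p * q - q * p}

namespace TraceAux

open Matrix

variable {F : Type*} [Field F] {g : ℕ}

/-- weighted labelled cycle -/
def cyc {k : ℕ} (w : ZMod k → Fin g) (b : F) (j : Fin g) : Matrix (ZMod k) (ZMod k) F :=
  Matrix.of fun s s' => if s' = s + 1 ∧ w s = j then b else 0

lemma cyc_prod {k : ℕ} [NeZero k] (w : ZMod k → Fin g) (b : F) (v : List (Fin g)) :
    ∀ s s' : ZMod k, (v.map (cyc w b)).prod s s' =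
      if s' = s + (v.length : ZMod k) ∧ (∀ i (h : i < v.length), w (s + (i : ZMod k)) = v[i])
      then b ^ v.length else 0 := by
  induction v with
  | nil =>
    intro s s'
    simp [Matrix.one_apply, eq_comm]
  | cons j v ih =>
    intro s s'
    rw [List.map_cons, List.prod_cons, Matrix.mul_apply]
    rw [Finset.sum_eq_single (s + 1)]
    · rw [ih]
      have h1 : (∀ i (h : i < (j :: v).length), w (s + (i : ZMod k)) = (j :: v)[i]) ↔
          (w s = j ∧ ∀ i (h : i < v.length), w (s + 1 + (i : ZMod k)) = v[i]) := by
        constructor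
        · intro H
          have H0 := H 0 (by simp)
          rw [List.getElem_cons_zero, Nat.cast_zero, add_zero] at H0
          refine ⟨H0, fun i h => ?_⟩
          have := H (i + 1) (by simpa using h)
          simp only [List.getElem_cons_succ] at this
          rw [← this]; congr 1; push_cast; ring
        · rintro ⟨H0, H⟩ i h
          cases i with
          | zero => simpa using H0
          | succ i =>
            simp only [List.getElem_cons_succ]
            rw [← H i (by simpa using h)]; congr 1; push_cast; ring
      have h2 : s + ((j :: v).length : ZMod k) = s + 1 + (v.length : ZMod k) := by
        simp only [List.length_cons]; push_cast; ring
      simp only [h1, h2]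
      simp only [cyc, Matrix.of_apply, List.length_cons]
      by_cases hj : w s = j <;> simp [hj, pow_succ']
    · intro x _ hx
      simp [cyc, hx]
    · simp

def IsCyc (τ : List (Fin g) → F) : Prop := ∀ u v, τ (u ++ v) = τ (v ++ u)

lemma IsCyc.rotate {τ : List (Fin g) → F} (h : IsCyc τ) (l : List (Fin g)) (n : ℕ)
    (hn : n ≤ l.length) : τ (l.rotate n) = τ l := by
  rw [List.rotate_eq_drop_append_take hn, h, List.take_append_drop]

def toL {k : ℕ} (w : ZMod k → Fin g) : List (Fin g) := (List.range k).map (fun i : ℕ => w (i : ZMod k))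

lemma blockDiag_prod {o ι : Type*} [Fintype o] [DecidableEq o] [Fintype ι] [DecidableEq ι]
    (A : o → Fin g → Matrix ι ι F) (v : List (Fin g)) :
    (v.map (fun j => Matrix.blockDiagonal (fun x => A x j))).prod =
      Matrix.blockDiagonal (fun x => (v.map (A x)).prod) := by
  induction v with
  | nil => simp only [List.map_nil, List.prod_nil]; exact (Matrix.blockDiagonal_one).symm
  | cons j v ih =>
    simp only [List.map_cons, List.prod_cons]
    rw [ih, ← Matrix.blockDiagonal_mul]

lemma fromBlocks_prod {ι κ : Type*} [Fintype ι] [DecidableEq ι] [Fintype κ] [DecidableEq κ]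
    (A : Fin g → Matrix ι ι F) (B : Fin g → Matrix κ κ F) (v : List (Fin g)) :
    (v.map (fun j => Matrix.fromBlocks (A j) 0 0 (B j))).prod =
      Matrix.fromBlocks (v.map A).prod 0 0 (v.map B).prod := by
  induction v with
  | nil => simp
  | cons j v ih =>
    simp only [List.map_cons, List.prod_cons]
    rw [ih, Matrix.fromBlocks_multiply]; simp

/-- step -/
lemma step [IsAlgClosed F] [CharZero F] (k : ℕ) [NeZero k] (τ : List (Fin g) → F) (hτ : IsCyc τ) :
    ∃ B : Fin g → Matrix (ZMod k × (ZMod k → Fin g)) (ZMod k × (ZMod k → Fin g)) F,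
      (∀ v : List (Fin g), v ≠ [] → v.length < k → ((v.map B).prod).trace = 0) ∧
      (∀ v : List (Fin g), v.length = k → ((v.map B).prod).trace = τ v) := by
  have hk : 0 < k := Nat.pos_of_ne_zero (NeZero.ne k)
  have hb : ∀ w : ZMod k → Fin g, ∃ b : F, b ^ k = τ (toL w) / k := fun w =>
    IsAlgClosed.exists_pow_nat_eq _ hk
  choose b hb using hb
  refine ⟨fun j => Matrix.blockDiagonal (fun w => cyc w (b w) j), ?_, ?_⟩
  · intro v hv hlt
    rw [blockDiag_prod, Matrix.trace_blockDiagonal]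
    refine Finset.sum_eq_zero fun w _ => Finset.sum_eq_zero fun s _ => ?_
    rw [Matrix.diag_apply, cyc_prod, if_neg]
    rintro ⟨h, -⟩
    have h0 : (v.length : ZMod k) = 0 := by simpa using h
    rw [ZMod.natCast_eq_zero_iff] at h0
    have := Nat.le_of_dvd (List.length_pos_iff.mpr hv) h0
    omega
  · intro v hv
    rw [blockDiag_prod, Matrix.trace_blockDiagonal]
    simp only [Matrix.trace, Matrix.diag_apply]
    rw [Finset.sum_comm]
    have key : ∀ s : ZMod k, ∑ w : ZMod k → Fin g, (v.map (cyc w (b w))).prod s s = τ v / k := by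
      intro s
      have hval : ∀ x : ZMod k, x.val < v.length := fun x => by rw [hv]; exact ZMod.val_lt x
      let w0 : ZMod k → Fin g := fun x => v[(x - s).val]'(hval _)
      have hw0 : ∀ i (h : i < v.length), w0 (s + (i : ZMod k)) = v[i] := by
        intro i h
        simp only [w0]
        congr 1
        rw [add_sub_cancel_left, ZMod.val_natCast, Nat.mod_eq_of_lt (by omega)]
      rw [Finset.sum_eq_single w0]
      · rw [cyc_prod, if_pos ⟨by simp [hv], hw0⟩, hv, hb]
        congr 1
        have : (toL w0).rotate s.val = v := by
          apply List.ext_getElem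
          · simp [toL, hv]
          · intro i h1 h2
            rw [List.getElem_rotate]
            simp only [toL, List.getElem_map, List.getElem_range, List.length_map,
              List.length_range]
            rw [← hw0 i h2]
            congr 1
            simp [add_comm]
        rw [← this]
        exact (hτ.rotate _ _ (by simpa [toL] using (ZMod.val_lt s).le)).symm
      · intro w _ hw
        rw [cyc_prod, if_neg]
        rintro ⟨-, H⟩
        apply hw
        funext x
        have := H (x - s).val (hval _)
        simpa [w0] using this
      · simp
    rw [Finset.sum_congr rfl fun s _ => key s]
    have : (k : F) ≠ 0 := Nat.cast_ne_zero.mpr hk.ne'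
    simp [ZMod.card]
    field_simp

lemma trace_isCyc {ι : Type*} [Fintype ι] [DecidableEq ι] (A : Fin g → Matrix ι ι F) :
    IsCyc (fun v => ((v.map A).prod).trace) := by
  intro u v
  simp only [List.map_append, List.prod_append]
  exact Matrix.trace_mul_comm _ _

lemma reach [IsAlgClosed F] [CharZero F] (k : ℕ) :
    ∃ (ι : Type) (_ : Fintype ι) (_ : DecidableEq ι) (_ : Nonempty ι),
      ∀ τ : List (Fin g) → F, IsCyc τ → ∃ A : Fin g → Matrix ι ι F,
        ∀ v : List (Fin g), v ≠ [] → v.length ≤ k → ((v.map A).prod).trace = τ v := by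
  induction k with
  | zero =>
    refine ⟨Unit, inferInstance, inferInstance, inferInstance, fun τ _ => ⟨0, fun v h1 h2 => ?_⟩⟩
    exact absurd (List.length_eq_zero_iff.mp (by omega)) h1
  | succ k ih =>
    obtain ⟨ι, i1, i2, i3, H⟩ := ih
    refine ⟨ι ⊕ (ZMod (k+1) × (ZMod (k+1) → Fin g)), inferInstance, inferInstance,
      inferInstance, fun τ hτ => ?_⟩
    obtain ⟨A, hA⟩ := H τ hτ
    obtain ⟨B, hB1, hB2⟩ := step (k+1) (fun v => τ v - ((v.map A).prod).trace) (by
      intro u v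
      have := trace_isCyc A u v
      simp only at this ⊢
      rw [this, hτ u v])
    refine ⟨fun j => Matrix.fromBlocks (A j) 0 0 (B j), fun v h1 h2 => ?_⟩
    rw [fromBlocks_prod]
    have htr : ∀ (P : Matrix ι ι F) (Q : Matrix (ZMod (k+1) × (ZMod (k+1) → Fin g)) _ F),
        (Matrix.fromBlocks P 0 0 Q).trace = P.trace + Q.trace := fun P Q => by
      simp [Matrix.trace, Fintype.sum_sum_type]
    rw [htr]
    rcases Nat.lt_or_ge v.length (k+1) with h | h
    · rw [hB1 v h1 h, hA v h1 (by omega), add_zero]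
    · rw [hB2 v (by omega)]; ring

lemma reachFin [IsAlgClosed F] [CharZero F] (k : ℕ) :
    ∃ n : ℕ, ∀ τ : List (Fin g) → F, IsCyc τ →
      ∃ A : Fin g → Matrix (Fin (n+1)) (Fin (n+1)) F,
        ∀ v : List (Fin g), v ≠ [] → v.length ≤ k → ((v.map A).prod).trace = τ v := by
  obtain ⟨ι, i1, i2, i3, H⟩ := reach (F := F) (g := g) k
  obtain ⟨n, hn⟩ : ∃ n, Fintype.card ι = n + 1 :=
    Nat.exists_eq_succ_of_ne_zero Fintype.card_ne_zero
  refine ⟨n, fun τ hτ => ?_⟩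
  obtain ⟨A, hA⟩ := H τ hτ
  let e : ι ≃ Fin (n+1) := Fintype.equivFinOfCardEq hn
  refine ⟨fun j => Matrix.reindexAlgEquiv F F e (A j), fun v h1 h2 => ?_⟩
  rw [← hA v h1 h2]
  have : (v.map fun j => Matrix.reindexAlgEquiv F F e (A j)).prod =
      Matrix.reindexAlgEquiv F F e (v.map A).prod := by
    rw [map_list_prod, List.map_map]; rfl
  rw [this]
  simp only [Matrix.trace, Matrix.diag_apply, Matrix.coe_reindexAlgEquiv,
    Matrix.reindex_apply, Matrix.submatrix_apply]
  exact Equiv.sum_comp e.symm (fun i => (v.map A).prod i i)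

lemma word_det (f : FreeAlgebra F (Fin g)) : ∃ d : ℕ, ∀ ψ : FreeAlgebra F (Fin g) →ₗ[F] F,
    (∀ v : List (Fin g), v.length ≤ d → ψ ((v.map (FreeAlgebra.ι F)).prod) = 0) → ψ f = 0 := by
  have hf : f ∈ Submodule.span F
      (Set.range fun v : List (Fin g) => (v.map (FreeAlgebra.ι F)).prod) := by
    let e := FreeAlgebra.equivMonoidAlgebraFreeMonoid (R := F) (X := Fin g)
    rw [← e.symm_apply_apply f]
    induction e f using MonoidAlgebra.induction_linear with
    | zero => simp
    | add a b ha hb => rw [map_add]; exact add_mem ha hb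
    | single m r =>
      rw [← mul_one r, ← smul_eq_mul, ← MonoidAlgebra.smul_single, map_smul]
      refine Submodule.smul_mem _ _ (Submodule.subset_span ⟨m.toList, ?_⟩)
      simp only
      rw [AlgEquiv.eq_symm_apply, map_list_prod, List.map_map]
      induction m using FreeMonoid.inductionOn' with
      | one => simp [MonoidAlgebra.one_def]
      | of_mul x m ih =>
        rw [FreeMonoid.toList_of_mul, List.map_cons, List.prod_cons, ih]
        simp [e, FreeAlgebra.equivMonoidAlgebraFreeMonoid, MonoidAlgebra.of_apply,
          MonoidAlgebra.single_mul_single]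
  induction hf using Submodule.span_induction with
  | mem x hx =>
    obtain ⟨v, rfl⟩ := hx
    exact ⟨v.length, fun ψ h => h v le_rfl⟩
  | zero => exact ⟨0, fun ψ _ => map_zero ψ⟩
  | add x y _ _ hx hy =>
    obtain ⟨d, hd⟩ := hx
    obtain ⟨d', hd'⟩ := hy
    refine ⟨max d d', fun ψ h => ?_⟩
    rw [map_add, hd ψ fun v hv => h v (le_max_of_le_left hv),
      hd' ψ fun v hv => h v (le_max_of_le_right hv), add_zero]
  | smul a x _ hx =>
    obtain ⟨d, hd⟩ := hx
    exact ⟨d, fun ψ h => by rw [map_smul, hd ψ h, smul_zero]⟩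

end TraceAux

open TraceAux in
/-- If the traces of `f 0, …, f (r-1)` have no common zero on `g`-tuples of `n × n`
matrices for any `n ≥ 1`, then some linear combination of the `f i` is cyclically
equivalent to `1`. -/
theorem trace_no_common_zero {F : Type*} [Field F] [IsAlgClosed F] [CharZero F]
    (g r : ℕ) (f : Fin r → FreeAlgebra F (Fin g))
    (hnocommon : ∀ (n : ℕ) (A : Fin g → Matrix (Fin (n + 1)) (Fin (n + 1)) F),
      ∃ i : Fin r, Matrix.trace (FreeAlgebra.lift F A (f i)) ≠ 0) :
    ∃ lam : Fin r → F, CycEq (∑ i : Fin r, lam i • f i) 1 := by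
  set C : Submodule F (FreeAlgebra F (Fin g)) := Submodule.span F
    {x : FreeAlgebra F (Fin g) | ∃ p q : FreeAlgebra F (Fin g), x = p * q - q * p} with hC
  by_cases h1 : (1 : FreeAlgebra F (Fin g)) ∈ Submodule.span F (Set.range f) ⊔ C
  · obtain ⟨y, hy, z, hz, hyz⟩ := Submodule.mem_sup.mp h1
    obtain ⟨lam, rfl⟩ := (Submodule.mem_span_range_iff_exists_fun F).mp hy
    refine ⟨lam, ?_⟩
    unfold CycEq
    rw [← hC, ← hyz, sub_add_cancel_left]
    exact neg_mem hz
  · exfalso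
    obtain ⟨φ, hφ1, hφ⟩ := Submodule.exists_le_ker_of_notMem h1
    have hφf : ∀ i, φ (f i) = 0 := fun i =>
      hφ (Submodule.mem_sup_left (Submodule.subset_span ⟨i, rfl⟩))
    have hφc : ∀ p q, φ (p * q) = φ (q * p) := fun p q => by
      have : φ (p * q - q * p) = 0 :=
        hφ (Submodule.mem_sup_right (Submodule.subset_span ⟨p, q, rfl⟩))
      rwa [map_sub, sub_eq_zero] at this
    choose d hd using fun i => word_det (f i)
    obtain ⟨n, hn⟩ := reachFin (F := F) (g := g) (Finset.univ.sup d)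
    obtain ⟨A, hA⟩ := hn
      (fun v => ((n : F) + 1) * (φ 1)⁻¹ * φ ((v.map (FreeAlgebra.ι F)).prod)) (by
        intro u v
        simp only [List.map_append, List.prod_append]
        rw [hφc])
    obtain ⟨i, hi⟩ := hnocommon n A
    apply hi
    have := hd i ((Matrix.traceLinearMap _ F F) ∘ₗ (FreeAlgebra.lift F A).toLinearMap
      - (((n : F) + 1) * (φ 1)⁻¹) • φ) (by
      intro v hv
      have hv' : v.length ≤ Finset.univ.sup d := hv.trans (Finset.le_sup (Finset.mem_univ i))
      have hw : FreeAlgebra.lift F A ((v.map (FreeAlgebra.ι F)).prod) = (v.map A).prod := by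
        rw [map_list_prod, List.map_map]
        congr 1
        apply List.map_congr_left
        intro a _
        simp
      simp only [LinearMap.sub_apply, LinearMap.comp_apply, AlgHom.toLinearMap_apply, hw,
        Matrix.traceLinearMap_apply, LinearMap.smul_apply, smul_eq_mul]
      rcases eq_or_ne v [] with rfl | hne
      · simp [mul_assoc, inv_mul_cancel₀ hφ1]
      · rw [hA v hne hv', sub_self])
    simpa [hφf] using this
end

section
/- (Spurnullstellensatz) Let F be an algebraically closed field of characteristic 0 and let f₁, …, f_r, f ∈ F⟨X⟩. The following are equivalent: (a) for every n ∈ ℕ and every A ∈ Mₙ(F)^g, if tr(f₁(A)) = … = tr(f_r(A)) = 0 then tr(f(A)) = 0; (b) either there exist λ₁, …, λ_r ∈ F such that f is cyclically equivalent to λ₁f₁ + ⋯ + λ_rf_r, or there exist λ₁, …, λ_r ∈ F such that λ₁f₁ + ⋯ + λ_rf_r is cyclically equivalent to 1. -/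
namespace Spur

open scoped Fin.CommRing Fin.NatCast

/-- evaluation of a word -/
abbrev word (F : Type*) [Field F] {g : ℕ} (l : List (Fin g)) : FreeAlgebra F (Fin g) :=
  (l.map (FreeAlgebra.ι F)).prod

lemma lift_word {F : Type*} [Field F] {g : ℕ} {B : Type*} [Ring B] [Algebra F B]
    (A : Fin g → B) (l : List (Fin g)) :
    FreeAlgebra.lift F A (word F l) = (l.map A).prod := by
  rw [word, map_list_prod, List.map_map]
  congr 2
  funext x
  simp

/-- words of bounded length -/
def wset (F : Type*) [Field F] (g d : ℕ) : Set (FreeAlgebra F (Fin g)) :=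
  {p | ∃ l : List (Fin g), l.length ≤ d ∧ p = word F l}

lemma wset_mono (F : Type*) [Field F] (g : ℕ) {d e : ℕ} (h : d ≤ e) :
    wset F g d ⊆ wset F g e := by
  rintro p ⟨l, hl, rfl⟩
  exact ⟨l, hl.trans h, rfl⟩

lemma exists_deg {F : Type*} [Field F] {g : ℕ} (p : FreeAlgebra F (Fin g)) :
    ∃ d, p ∈ Submodule.span F (wset F g d) := by
  induction p using FreeAlgebra.induction with
  | grade0 r =>
    refine ⟨0, ?_⟩
    rw [Algebra.algebraMap_eq_smul_one]
    exact Submodule.smul_mem _ _ (Submodule.subset_span ⟨[], by simp, by simp [word]⟩)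
  | grade1 x => exact ⟨1, Submodule.subset_span ⟨[x], by simp, by simp [word]⟩⟩
  | mul a b ha hb =>
    obtain ⟨d, hd⟩ := ha
    obtain ⟨e, he⟩ := hb
    refine ⟨d + e, ?_⟩
    have := Submodule.mul_mem_mul hd he
    rw [Submodule.span_mul_span] at this
    refine Submodule.span_mono ?_ this
    rintro _ ⟨_, ⟨l, hl, rfl⟩, _, ⟨m, hm, rfl⟩, rfl⟩
    exact ⟨l ++ m, by simp; omega, by simp [word]⟩
  | add a b ha hb =>
    obtain ⟨d, hd⟩ := ha
    obtain ⟨e, he⟩ := hb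
    exact ⟨d + e, Submodule.add_mem _
      (Submodule.span_mono (wset_mono F g (by omega)) hd)
      (Submodule.span_mono (wset_mono F g (by omega)) he)⟩

lemma rot_one {F : Type*} [Field F] {g d : ℕ} (T : FreeAlgebra F (Fin g) →ₗ[F] F)
    (hT : ∀ p q, T (p * q) = T (q * p)) (v : Fin (d + 1) → Fin g) :
    T (word F (List.ofFn fun m => v (m + 1))) = T (word F (List.ofFn v)) := by
  have h1 : (List.ofFn fun m => v (m + 1)) = (List.ofFn fun m : Fin d => v m.succ) ++ [v 0] := by
    rw [List.ofFn_succ']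
    simp
  have h2 : List.ofFn v = [v 0] ++ (List.ofFn fun m : Fin d => v m.succ) := by
    rw [List.ofFn_succ]; rfl
  rw [h1, h2]
  simp only [word, List.map_append, List.prod_append]
  exact hT _ _

lemma rot_nat {F : Type*} [Field F] {g d : ℕ} (T : FreeAlgebra F (Fin g) →ₗ[F] F)
    (hT : ∀ p q, T (p * q) = T (q * p)) (n : ℕ) (v : Fin (d + 1) → Fin g) :
    T (word F (List.ofFn fun m => v (m + (n : Fin (d + 1))))) = T (word F (List.ofFn v)) := by
  induction n with
  | zero => simp
  | succ n ih =>
    rw [← ih, ← rot_one T hT (fun m => v (m + (n : Fin (d + 1))))]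
    congr 4
    funext m
    congr 1
    push_cast
    ring

lemma rot {F : Type*} [Field F] {g d : ℕ} (T : FreeAlgebra F (Fin g) →ₗ[F] F)
    (hT : ∀ p q, T (p * q) = T (q * p)) (i : Fin (d + 1)) (v : Fin (d + 1) → Fin g) :
    T (word F (List.ofFn fun m => v (m + i))) = T (word F (List.ofFn v)) := by
  have := rot_nat T hT i.val v
  simpa using this

/-- weighted cycle -/
def cyc {F : Type*} [Field F] {g d : ℕ} (w : Fin (d + 1) → Fin g) (t : F) (x : Fin g) :
    Matrix (Fin (d + 1)) (Fin (d + 1)) F :=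
  Matrix.of fun i j => if j = i + 1 ∧ w i = x then t else 0

lemma cyc_prod {F : Type*} [Field F] {g d : ℕ} (w : Fin (d + 1) → Fin g) (t : F)
    (l : List (Fin g)) (i j : Fin (d + 1)) :
    (l.map (cyc w t)).prod i j =
      if j = i + (l.length : Fin (d + 1)) ∧
        (∀ m (h : m < l.length), w (i + (m : Fin (d + 1))) = l[m]) then t ^ l.length else 0 := by
  induction l generalizing i with
  | nil => simp [Matrix.one_apply, eq_comm]
  | cons x l ih =>
    rw [List.map_cons, List.prod_cons, Matrix.mul_apply, Finset.sum_eq_single (i + 1)]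
    · rw [ih]
      have e : ∀ m : ℕ, i + 1 + (m : Fin (d + 1)) = i + ((m + 1 : ℕ) : Fin (d + 1)) := by
        intro m; push_cast; ring
      have key : (∀ m (h : m < (x :: l).length), w (i + (m : Fin (d + 1))) = (x :: l)[m]) ↔
          (w i = x ∧ ∀ m (h : m < l.length), w (i + 1 + (m : Fin (d + 1))) = l[m]) := by
        constructor
        · intro H
          refine ⟨?_, fun m h => ?_⟩
          · have h0 : w (i + ((0 : ℕ) : Fin (d + 1))) = x := H 0 (by simp)
            rwa [Nat.cast_zero, add_zero] at h0
          · rw [e]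
            exact H (m + 1) (by simpa using h)
        · rintro ⟨h0, H⟩ m h
          cases m with
          | zero =>
            rw [Nat.cast_zero, add_zero]
            exact h0
          | succ m =>
            rw [← e]
            exact H m (by simpa using h)
      simp only [key]
      simp only [List.length_cons, ← e]
      simp only [cyc, Matrix.of_apply, true_and]
      by_cases h1 : w i = x
      · simp only [h1, true_and, if_true, mul_ite, mul_zero, pow_succ']
      · simp [h1]
    · intro k _ hk
      simp [cyc, hk]
    · simp

lemma cyc_trace_lt {F : Type*} [Field F] {g d : ℕ} (w : Fin (d + 1) → Fin g) (t : F)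
    (l : List (Fin g)) (h1 : 1 ≤ l.length) (h2 : l.length ≤ d) :
    ((l.map (cyc w t)).prod).trace = 0 := by
  rw [Matrix.trace]
  refine Finset.sum_eq_zero fun i _ => ?_
  rw [Matrix.diag_apply, cyc_prod, if_neg]
  rintro ⟨h, -⟩
  have h3 : ((l.length : ℕ) : Fin (d + 1)) = 0 := by simpa using h.symm
  have h4 := congrArg Fin.val h3
  rw [Fin.val_natCast, Nat.mod_eq_of_lt (by omega)] at h4
  simp at h4
  simp [h4] at h1

lemma cyc_trace_eq {F : Type*} [Field F] {g d : ℕ} (w : Fin (d + 1) → Fin g) (t : F)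
    (v : Fin (d + 1) → Fin g) :
    (((List.ofFn v).map (cyc w t)).prod).trace =
      ∑ i : Fin (d + 1), if w = (fun m => v (m - i)) then t ^ (d + 1) else 0 := by
  rw [Matrix.trace]
  refine Finset.sum_congr rfl fun i _ => ?_
  rw [Matrix.diag_apply, cyc_prod]
  simp only [List.length_ofFn]
  refine if_congr ?_ rfl rfl
  constructor
  · rintro ⟨-, H⟩
    funext m
    have := H (m - i).val (m - i).isLt
    rw [List.getElem_ofFn, Fin.cast_val_eq_self, add_sub_cancel] at this
    exact this
  · rintro rfl
    refine ⟨by simp, fun m h => ?_⟩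
    simp only [List.getElem_ofFn, add_sub_cancel_left]
    congr 1
    exact Fin.ext (by rw [Fin.val_natCast, Nat.mod_eq_of_lt h])

lemma trace_blocks {F : Type*} [Field F] {α β : Type*} [Fintype α] [Fintype β]
    (A : Matrix α α F) (B : Matrix β β F) :
    (Matrix.fromBlocks A 0 0 B).trace = A.trace + B.trace := by
  simp [Matrix.trace]

lemma fromBlocks_prod {F : Type*} [Field F] {α β X : Type*} [Fintype α] [Fintype β]
    [DecidableEq α] [DecidableEq β] (A : X → Matrix α α F) (B : X → Matrix β β F) (l : List X) :
    (l.map fun x => Matrix.fromBlocks (A x) 0 0 (B x)).prod =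
      Matrix.fromBlocks (l.map A).prod 0 0 (l.map B).prod := by
  induction l with
  | nil => simp
  | cons x l ih => simp [ih, Matrix.fromBlocks_multiply]

lemma blockDiagonal_prod {F : Type*} [Field F] {α β X : Type*} [Fintype α] [Fintype β]
    [DecidableEq α] [DecidableEq β] (A : β → X → Matrix α α F) (l : List X) :
    (l.map fun x => Matrix.blockDiagonal (fun b => A b x)).prod =
      Matrix.blockDiagonal (fun b => (l.map (A b)).prod) := by
  induction l with
  | nil => exact (Matrix.blockDiagonal_one (m := α) (o := β) (α := F)).symm
  | cons x l ih => simp [ih, Matrix.blockDiagonal_mul]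

lemma realize (F : Type*) [Field F] [IsAlgClosed F] [CharZero F] (g d : ℕ) :
    ∃ (α : Type) (_ : Fintype α) (_ : DecidableEq α) (_ : Nonempty α),
      ∀ L : FreeAlgebra F (Fin g) →ₗ[F] F, (∀ p q, L (p * q) = L (q * p)) →
        ∃ A : Fin g → Matrix α α F, ∀ l : List (Fin g), 1 ≤ l.length → l.length ≤ d →
          ((l.map A).prod).trace = L (word F l) := by
  induction d with
  | zero => exact ⟨Unit, inferInstance, inferInstance, inferInstance, fun L _ =>
      ⟨0, fun l h1 h2 => by omega⟩⟩
  | succ d ih =>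
    obtain ⟨α, _, _, _, H⟩ := ih
    refine ⟨α ⊕ (Fin (d + 1) × (Fin (d + 1) → Fin g)), inferInstance, inferInstance,
      ⟨Sum.inl (Classical.arbitrary α)⟩, fun L hL => ?_⟩
    obtain ⟨A, hA⟩ := H L hL
    let T : FreeAlgebra F (Fin g) →ₗ[F] F :=
      L - (Matrix.traceLinearMap α F F) ∘ₗ (FreeAlgebra.lift F A).toLinearMap
    have hTa : ∀ p, T p = L p - (FreeAlgebra.lift F A p).trace := fun p => rfl
    have hT : ∀ p q, T (p * q) = T (q * p) := by
      intro p q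
      rw [hTa, hTa, hL p q, map_mul (FreeAlgebra.lift F A), map_mul (FreeAlgebra.lift F A),
        Matrix.trace_mul_comm]
    have hroot : ∀ w : Fin (d + 1) → Fin g, ∃ t : F,
        t ^ (d + 1) = T (word F (List.ofFn w)) / ((d + 1 : ℕ) : F) := fun w =>
      IsAlgClosed.exists_pow_nat_eq _ (Nat.succ_pos d)
    choose t ht using hroot
    refine ⟨fun x => Matrix.fromBlocks (A x) 0 0
      (Matrix.blockDiagonal fun w => cyc w (t w) x), fun l h1 h2 => ?_⟩
    rw [fromBlocks_prod, trace_blocks,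
      blockDiagonal_prod (fun w x => cyc w (t w) x), Matrix.trace_blockDiagonal]
    rcases Nat.lt_or_ge d l.length with h | h
    · have hl : l.length = d + 1 := by omega
      obtain ⟨v, rfl⟩ : ∃ v : Fin (d + 1) → Fin g, l = List.ofFn v :=
        ⟨fun m => l[m.val]'(by omega), by
          apply List.ext_getElem
          · rw [List.length_ofFn, hl]
          · intro i h1 h2
            rw [List.getElem_ofFn]⟩
      have : ∑ w : Fin (d + 1) → Fin g, (((List.ofFn v).map (cyc w (t w))).prod).trace
          = T (word F (List.ofFn v)) := by
        simp only [cyc_trace_eq, ht]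
        rw [Finset.sum_comm]
        simp only [Finset.sum_ite_eq', Finset.mem_univ, if_true, sub_eq_add_neg]
        simp only [rot T hT]
        rw [Finset.sum_const, Finset.card_univ, Fintype.card_fin, nsmul_eq_mul]
        have : ((d + 1 : ℕ) : F) ≠ 0 := by exact_mod_cast Nat.succ_ne_zero d
        field_simp
      rw [this, hTa, lift_word]
      ring
    · rw [hA l h1 h, Finset.sum_eq_zero fun w _ => cyc_trace_lt w (t w) l h1 h, add_zero]

lemma exists_dual {F V : Type*} [Field F] [AddCommGroup V] [Module F V] (U : Submodule F V)
    {a b : V} (ha : a ∉ U) (hb : b ∉ U) :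
    ∃ L : V →ₗ[F] F, (∀ u ∈ U, L u = 0) ∧ L a ≠ 0 ∧ L b ≠ 0 := by
  obtain ⟨L1, h1, k1⟩ := Submodule.exists_le_ker_of_notMem ha
  obtain ⟨L2, h2, k2⟩ := Submodule.exists_le_ker_of_notMem hb
  have k1' : ∀ u ∈ U, L1 u = 0 := fun u hu => k1 hu
  have k2' : ∀ u ∈ U, L2 u = 0 := fun u hu => k2 hu
  by_cases e1 : L1 b = 0
  · by_cases e2 : L2 a = 0
    · exact ⟨L1 + L2, fun u hu => by simp [k1' u hu, k2' u hu], by simpa [e2] using h1,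
        by simpa [e1] using h2⟩
    · exact ⟨L2, k2', e2, h2⟩
  · exact ⟨L1, k1', h1, e1⟩

lemma trace_comm_span {F : Type*} [Field F] {g n : ℕ} (A : Fin g → Matrix (Fin n) (Fin n) F)
    {p q : FreeAlgebra F (Fin g)} (h : CycEq p q) :
    (FreeAlgebra.lift F A p).trace = (FreeAlgebra.lift F A q).trace := by
  have : Submodule.span F
      {x : FreeAlgebra F (Fin g) | ∃ p q : FreeAlgebra F (Fin g), x = p * q - q * p} ≤
      LinearMap.ker ((Matrix.traceLinearMap (Fin n) F F) ∘ₗ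
        (FreeAlgebra.lift F A).toLinearMap) := by
    rw [Submodule.span_le]
    rintro _ ⟨p, q, rfl⟩
    simp [Matrix.trace_mul_comm (FreeAlgebra.lift F A p), sub_eq_zero]
  have := this h
  simpa [sub_eq_zero] using this

end Spur

/-- **Spurnullstellensatz.** Over an algebraically closed field `F` of characteristic
zero, `tr (f A) = 0` whenever `tr (f₁ A) = ⋯ = tr (f_r A) = 0` (for all matrix sizes)
iff `f` is cyclically equivalent to a linear combination of the `f i`, or some
linear combination of the `f i` is cyclically equivalent to `1`. -/
theorem spurnullstellensatz {F : Type*} [Field F] [IsAlgClosed F] [CharZero F]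
    (g r : ℕ) (f : Fin r → FreeAlgebra F (Fin g)) (f₀ : FreeAlgebra F (Fin g)) :
    (∀ (n : ℕ) (A : Fin g → Matrix (Fin n) (Fin n) F),
        (∀ i : Fin r, Matrix.trace (FreeAlgebra.lift F A (f i)) = 0) →
        Matrix.trace (FreeAlgebra.lift F A f₀) = 0)
    ↔ ((∃ lam : Fin r → F, CycEq f₀ (∑ i : Fin r, lam i • f i)) ∨
       (∃ lam : Fin r → F, CycEq (∑ i : Fin r, lam i • f i) 1)) := by
  constructor
  · intro H
    by_contra hcon
    rw [not_or] at hcon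
    obtain ⟨hc1, hc2⟩ := hcon
    set C : Submodule F (FreeAlgebra F (Fin g)) := Submodule.span F
      {x : FreeAlgebra F (Fin g) | ∃ p q : FreeAlgebra F (Fin g), x = p * q - q * p} with hC
    have mem : ∀ p, p ∈ Submodule.span F (Set.range f) ⊔ C →
        ∃ lam : Fin r → F, p - ∑ i, lam i • f i ∈ C := by
      intro p hp
      obtain ⟨u, hu, c, hc, rfl⟩ := Submodule.mem_sup.1 hp
      obtain ⟨lam, rfl⟩ := (Submodule.mem_span_range_iff_exists_fun F).1 hu
      exact ⟨lam, by simpa using hc⟩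
    have n1 : f₀ ∉ Submodule.span F (Set.range f) ⊔ C := fun h => hc1 (mem _ h)
    have n2 : (1 : FreeAlgebra F (Fin g)) ∉ Submodule.span F (Set.range f) ⊔ C := fun h => by
      obtain ⟨lam, hl⟩ := mem _ h
      refine hc2 ⟨lam, ?_⟩
      have := C.neg_mem hl
      rwa [neg_sub] at this
    obtain ⟨L, hL0, hL1, hL2⟩ := Spur.exists_dual _ n1 n2
    have hLc : ∀ p q, L (p * q) = L (q * p) := fun p q => by
      have : L (p * q - q * p) = 0 := hL0 _
        (Submodule.mem_sup_right (Submodule.subset_span ⟨p, q, rfl⟩))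
      rwa [map_sub, sub_eq_zero] at this
    choose deg hdeg using fun p : FreeAlgebra F (Fin g) => Spur.exists_deg p
    obtain ⟨α, _, _, _, R⟩ := Spur.realize F g (deg f₀ + ∑ i, deg (f i))
    set N : F := (Fintype.card α : F) with hN
    have hN0 : N ≠ 0 := by
      rw [hN]; exact_mod_cast Fintype.card_ne_zero
    obtain ⟨A, hA⟩ := R ((N / L 1) • L) (fun p q => by simp [hLc p q])
    have key : ∀ p e, e ≤ deg f₀ + ∑ i, deg (f i) →
        p ∈ Submodule.span F (Spur.wset F g e) →
        (FreeAlgebra.lift F A p).trace = (N / L 1) * L p := by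
      intro p e he hp
      have hle : Submodule.span F (Spur.wset F g e) ≤ LinearMap.ker
          ((Matrix.traceLinearMap α F F) ∘ₗ (FreeAlgebra.lift F A).toLinearMap
            - (N / L 1) • L) := by
        rw [Submodule.span_le]
        rintro _ ⟨l, hl, rfl⟩
        have : (FreeAlgebra.lift F A (Spur.word F l)).trace = (N / L 1) * L (Spur.word F l) := by
          rcases Nat.eq_zero_or_pos l.length with h | h
          · obtain rfl := List.length_eq_zero_iff.1 h
            simp only [Spur.word, List.map_nil, List.prod_nil, map_one, Matrix.trace_one]
            field_simp
            exact hN.symm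
          · rw [Spur.lift_word, hA l h (hl.trans he)]
            rfl
        simpa [sub_eq_zero] using this
      have := hle hp
      simpa [sub_eq_zero] using this
    let e := Fintype.equivFin α
    let φ := Matrix.reindexAlgEquiv F F e
    have hφ : ∀ p, (FreeAlgebra.lift F (fun x => φ (A x)) p).trace
        = (FreeAlgebra.lift F A p).trace := by
      intro p
      have h1 : FreeAlgebra.lift F (fun x => φ (A x)) =
          (φ : _ →ₐ[F] _).comp (FreeAlgebra.lift F A) := by
        ext x; simp
      rw [h1]
      simp only [AlgHom.comp_apply, AlgHom.coe_coe]
      simp only [φ, Matrix.reindexAlgEquiv_apply, Matrix.trace, Matrix.diag_apply,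
        Matrix.reindex_apply, Matrix.submatrix_apply]
      exact Equiv.sum_comp e.symm (fun i => (FreeAlgebra.lift F A p) i i)
    have := H (Fintype.card α) (fun x => φ (A x)) (fun i => by
      rw [hφ, key (f i) _ _ (hdeg (f i)), hL0 _ (Submodule.mem_sup_left
        (Submodule.subset_span ⟨i, rfl⟩)), mul_zero]
      exact (Finset.single_le_sum (f := fun i => deg (f i)) (fun _ _ => Nat.zero_le _)
        (Finset.mem_univ i)).trans (Nat.le_add_left _ _))
    rw [hφ, key f₀ _ (Nat.le_add_right _ _) (hdeg f₀)] at this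
    exact mul_ne_zero (div_ne_zero hN0 hL2) hL1 this
  · rintro (⟨lam, h⟩ | ⟨lam, h⟩) n A hA
    · rw [Spur.trace_comm_span A h]
      simp [Matrix.trace_sum, hA]
    · have := Spur.trace_comm_span A h
      simp only [map_sum, map_smul, Matrix.trace_sum, Matrix.trace_smul, hA, smul_zero,
        Finset.sum_const_zero, map_one, Matrix.trace_one, Fintype.card_fin] at this
      have hn : n = 0 := by exact_mod_cast this.symm
      subst hn
      simp [Matrix.trace]
end

section
/- Let F be an algebraically closed field of characteristic 0 and let g ≥ 2. For every n ∈ ℕ there exist f₁, f₂ ∈ F⟨X⟩ such that: (a) there is no A ∈ Mₙ(F)^g with tr(f₁(A)) = tr(f₂(A)) = 0; and (b) there are no scalars λ₁, λ₂ ∈ F and no p ∈ F⟨X⟩ satisfying p(A) = 0 for all A ∈ Mₙ(F)^g such that λ₁f₁ + λ₂f₂ is cyclically equivalent to 1 + p. -/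
open Matrix in
lemma ddf_altTrace {F M ι : Type*} [Field F] [AddCommGroup M] [Module F M] [Fintype ι]
    [DecidableEq ι] (b : Module.Basis ι F M) (f : M [⋀^ι]→ₗ[F] F) (T : M →ₗ[F] M) (W : ι → M) :
    ∑ k, f (Function.update W k (T (W k))) = (∑ k, b.repr (T (b k)) k) * f W := by
  classical
  let m : MultilinearMap F (fun _ : ι => M) F :=
    ∑ k, f.toMultilinearMap.compLinearMap (fun i => if i = k then T else LinearMap.id)
  have hm : ∀ W : ι → M, m W = ∑ k, f (Function.update W k (T (W k))) := by
    intro W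
    simp only [m, _root_.sum_apply, MultilinearMap.compLinearMap_apply]
    refine Finset.sum_congr rfl fun k _ => ?_
    change f _ = f _
    congr 1
    ext i
    by_cases h : i = k
    · subst h; simp
    · simp [h]
  let D : M [⋀^ι]→ₗ[F] F :=
    { m with
      map_eq_zero_of_eq' := by
        intro v i j hij hne
        change m v = 0
        rw [hm, ← Finset.sum_subset (Finset.subset_univ {i, j}), Finset.sum_pair hne]
        · have : Function.update v j (T (v j)) =
              Function.update v i (T (v i)) ∘ Equiv.swap i j := by
            ext k
            by_cases h1 : k = i
            · subst h1; simp [hne, hne.symm, hij]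
            · by_cases h2 : k = j
              · subst h2; simp [hij]
              · simp [h1, h2, Equiv.swap_apply_of_ne_of_ne h1 h2]
          rw [this, f.map_swap _ hne]
          simp
        · intro k _ hk
          simp only [Finset.mem_insert, Finset.mem_singleton, not_or] at hk
          apply f.map_eq_zero_of_eq _ _ hne
          rw [Function.update_of_ne (Ne.symm hk.1), Function.update_of_ne (Ne.symm hk.2), hij] }
  have hD : ∀ W, D W = ∑ k, f (Function.update W k (T (W k))) := hm
  have hDb : D b = (∑ k, b.repr (T (b k)) k) * f b := by
    rw [hD, Finset.sum_mul]
    refine Finset.sum_congr rfl fun k _ => ?_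
    conv_lhs => rw [← b.sum_repr (T (b k))]
    rw [f.map_update_sum, Finset.sum_eq_single k]
    · rw [f.map_update_smul]; simp
    · intro j _ hj
      rw [f.map_update_smul]
      rw [f.map_eq_zero_of_eq _ _ hj, smul_zero]
      simp [hj]
    · simp
  rw [← hD, D.eq_smul_basis_det b, hDb]
  conv_rhs => rw [f.eq_smul_basis_det b]
  simp [mul_assoc]

lemma ddf_trMul {F : Type*} [Field F] {n : ℕ} (Z : Matrix (Fin n) (Fin n) F) :
    ∑ k, ((Matrix.stdBasis F (Fin n) (Fin n)).reindex finProdFinEquiv).repr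
      (LinearMap.mulLeft F Z (((Matrix.stdBasis F (Fin n) (Fin n)).reindex finProdFinEquiv) k)) k
      = n * Z.trace := by
  rw [← finProdFinEquiv.sum_comp, Fintype.sum_prod_type]
  have : ∀ (A : Matrix (Fin n) (Fin n) F) i j,
      (Matrix.stdBasis F (Fin n) (Fin n)).repr A (i, j) = A i j := by
    intro A i j
    simp [Matrix.stdBasis]
  simp [this, Matrix.stdBasis_eq_single, Matrix.trace, Finset.mul_sum]

/-- Capelli polynomial. -/
noncomputable def ddfCap {F : Type*} [Field F] {R : Type*} [Ring R] [Algebra F R] {N : ℕ}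
    (v : Fin N → R) : R [⋀^Fin N]→ₗ[F] R :=
  MultilinearMap.alternatization
    ((MultilinearMap.mkPiAlgebraFin F N R).compLinearMap (fun k => LinearMap.mulRight F (v k)))

lemma ddfCap_apply {F : Type*} [Field F] {R : Type*} [Ring R] [Algebra F R] {N : ℕ}
    (v w : Fin N → R) : ddfCap (F := F) v w =
      ∑ σ : Equiv.Perm (Fin N), Equiv.Perm.sign σ • (List.ofFn fun k => w (σ k) * v k).prod := by
  simp [ddfCap, MultilinearMap.alternatization_apply, MultilinearMap.mkPiAlgebraFin_apply]

lemma ddfCap_map {F : Type*} [Field F] {R S : Type*} [Ring R] [Algebra F R] [Ring S]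
    [Algebra F S] {N : ℕ} (φ : R →ₐ[F] S)
    (v w : Fin N → R) : φ (ddfCap (F := F) v w) = ddfCap (F := F) (φ ∘ v) (φ ∘ w) := by
  simp only [ddfCap_apply, map_sum]
  refine Finset.sum_congr rfl fun σ _ => ?_
  rw [Units.smul_def, Units.smul_def, map_zsmul, map_list_prod, List.map_ofFn]
  congr 3
  ext k; simp

lemma ddf_walk {F : Type*} [Field F] {n : ℕ} (m : ℕ) : ∀ (a r : ℕ → Fin n) (c : ℕ → F) (q : Fin n),
    (List.ofFn fun k : Fin m => Matrix.single (a k) (r (k + 1)) (c k)).prod (r 0) q ≠ 0 →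
    (∀ k < m, a k = r k ∧ c k ≠ 0) ∧ q = r m := by
  induction m with
  | zero =>
    intro a r c q h
    simp only [List.ofFn_zero, List.prod_nil] at h
    refine ⟨by simp, ?_⟩
    by_contra hq
    exact h (Matrix.one_apply_ne (Ne.symm hq))
  | succ m ih =>
    intro a r c q h
    rw [List.ofFn_succ, List.prod_cons] at h
    by_cases h0 : r 0 = a 0
    · simp only [Fin.val_zero, Fin.val_succ] at h
      rw [h0, Matrix.single_mul_apply_same] at h
      have h2 := ih (fun k => a (k+1)) (fun k => r (k+1)) (fun k => c (k+1)) q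
        (right_ne_zero_of_mul h)
      refine ⟨?_, h2.2⟩
      intro k hk
      cases k with
      | zero => exact ⟨h0.symm, left_ne_zero_of_mul h⟩
      | succ k => exact h2.1 k (by omega)
    · exact absurd (Matrix.single_mul_apply_of_ne _ _ _ _ _ (by simpa using h0) _) h

lemma ddf_walk_eq {F : Type*} [Field F] {n : ℕ} (m : ℕ) : ∀ (r : ℕ → Fin n),
    (List.ofFn fun k : Fin (m+1) => Matrix.single (r k) (r (k + 1)) (1 : F)).prod =
      Matrix.single (r 0) (r (m+1)) 1 := by
  induction m with
  | zero => intro r; simp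
  | succ m ih =>
    intro r
    rw [List.ofFn_succ, List.prod_cons]
    have := ih (fun k => r (k+1))
    simp only [Fin.val_zero, Fin.val_succ]
    rw [this]
    simp

lemma ddf_cap_one {F : Type*} [Field F] {n m : ℕ} (e : Fin (m+1) ≃ Fin n × Fin n) :
    Matrix.trace (ddfCap (F := F)
      (fun k => Matrix.single (e k).2 (e (k+1)).1 (1:F))
      (fun k => Matrix.single (e k).1 (e k).2 (1:F))) = 1 := by
  rw [ddfCap_apply, Matrix.trace_sum, Finset.sum_eq_single 1]
  · have := ddf_walk_eq (F := F) m (fun k => (e (Fin.ofNat (m+1) k)).1)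
    have h2 : ∀ k : Fin (m+1), (Fin.ofNat (m+1) (k+1 : ℕ)) = k + 1 := by
      intro k; ext; simp [Fin.val_add]
    have h3 : ∀ k : Fin (m+1), (Fin.ofNat (m+1) (k : ℕ)) = k := by
      intro k; ext; simp
    have hz : Fin.ofNat (m+1) (m+1) = 0 := by ext; simp
    have hz' : Fin.ofNat (m+1) 0 = 0 := by ext; simp
    simp only [h2, h3, hz, hz'] at this
    simp only [Equiv.Perm.sign_one, one_smul, Equiv.Perm.one_apply,
      Matrix.single_mul_single_same, mul_one]
    rw [this]
    simp
  · intro σ _ hσ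
    rw [Units.smul_def, Matrix.trace_smul]
    suffices h : Matrix.trace (List.ofFn fun k => Matrix.single (e (σ k)).1 (e (σ k)).2 (1:F) *
      Matrix.single (e k).2 (e (k+1)).1 (1:F)).prod = 0 by rw [h, smul_zero]
    rw [Matrix.trace]
    refine Finset.sum_eq_zero fun p _ => ?_
    by_contra hne
    apply hσ
    have h2 : ∀ k : Fin (m+1), (Fin.ofNat (m+1) (k+1 : ℕ)) = k + 1 := by
      intro k; ext; simp [Fin.val_add]
    have h3 : ∀ k : Fin (m+1), (Fin.ofNat (m+1) (k : ℕ)) = k := by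
      intro k; ext; simp
    have key := ddf_walk (F := F) (m+1) (fun k => (e (σ (Fin.ofNat (m+1) k))).1)
      (fun k => if k = 0 then p else (e (Fin.ofNat (m+1) k)).1)
      (fun k => if (e (σ (Fin.ofNat (m+1) k))).2 = (e (Fin.ofNat (m+1) k)).2 then 1 else 0) p (by
        rw [if_pos rfl]
        have hfun : (fun k : Fin (m+1) => Matrix.single (e (σ k)).1 (e (σ k)).2 (1:F) *
            Matrix.single (e k).2 (e (k+1)).1 (1:F)) = fun k : Fin (m+1) =>
            Matrix.single (e (σ k)).1 (e (k+1)).1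
              (if (e (σ k)).2 = (e k).2 then (1:F) else 0) := by
          ext1 k
          by_cases h : (e (σ k)).2 = (e k).2
          · rw [h]; simp
          · rw [Matrix.single_mul_single_of_ne _ _ _ _ h]; simp [h]
        rw [hfun] at hne
        simp only [Nat.succ_ne_zero, if_false, h2, h3]
        exact hne)
    obtain ⟨k1, k2⟩ := key
    have hz : Fin.ofNat (m+1) (m+1) = 0 := by ext; simp
    simp only [Nat.succ_ne_zero, if_false, hz] at k2
    ext k : 1
    apply e.injective
    have := k1 k k.2
    simp only [h3] at this
    refine Prod.ext ?_ ?_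
    · rw [this.1]
      split_ifs with h
      · rw [k2]
        have : k = 0 := by ext; simpa using h
        rw [this]; rfl
      · rfl
    · by_contra hh
      exact this.2 (if_neg hh)
  · simp

lemma ddf_surj {F : Type*} [Field F] [CharZero F] (g : ℕ) (hg : 2 ≤ g) (n : ℕ) :
    ∃ A : Fin g → Matrix (Fin n) (Fin n) F,
      A ⟨0, by omega⟩ = Matrix.diagonal (fun i : Fin n => (i : F) + 1) ∧
      Function.Surjective (FreeAlgebra.lift F A) := by
  let A : Fin g → Matrix (Fin n) (Fin n) F := fun i =>
    if i.1 = 0 then Matrix.diagonal (fun i : Fin n => (i : F) + 1) else Matrix.of fun _ _ => 1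
  refine ⟨A, by simp [A], ?_⟩
  rw [← AlgHom.range_eq_top, eq_top_iff]
  set S := (FreeAlgebra.lift F A).range with hS
  have hA : ∀ i, A i ∈ S := fun i => ⟨FreeAlgebra.ι F i, by simp⟩
  have hX : Matrix.diagonal (fun i : Fin n => (i : F) + 1) ∈ S := by
    simpa [A] using hA ⟨0, by omega⟩
  have hJ : (Matrix.of fun _ _ => 1 : Matrix (Fin n) (Fin n) F) ∈ S := by
    simpa [A] using hA ⟨1, by omega⟩
  have hinj : Function.Injective (fun i : Fin n => (i : F) + 1) := by
    intro i j h; simpa [Fin.ext_iff] using h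
  have hd : ∀ d : Fin n → F, Matrix.diagonal d ∈ S := by
    intro d
    let P := Lagrange.interpolate Finset.univ (fun i : Fin n => (i : F) + 1) d
    have h1 : Polynomial.aeval (Matrix.diagonal (fun i : Fin n => (i : F) + 1)) P
        = Matrix.diagonal d := by
      change Polynomial.aeval (Matrix.diagonalAlgHom F (fun i : Fin n => (i : F) + 1)) P = _
      rw [Polynomial.aeval_algHom_apply]
      change Matrix.diagonal _ = _
      congr 1
      ext i
      rw [Polynomial.aeval_pi_apply₂]
      rw [Polynomial.coe_aeval_eq_eval]
      exact Lagrange.eval_interpolate_at_node _ (hinj.injOn) (Finset.mem_univ i)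
    rw [← h1]
    exact Polynomial.aeval_mem_adjoin_singleton F _ |> fun h =>
      (Algebra.adjoin_le (Set.singleton_subset_iff.2 hX)) h
  have hs : ∀ i j, Matrix.single i j (1:F) ∈ S := by
    intro i j
    have := S.mul_mem (S.mul_mem (hd (Pi.single i 1)) hJ) (hd (Pi.single j 1))
    rw [Matrix.diagonal_single, Matrix.diagonal_single, Matrix.single_mul_mul_single] at this
    simpa using this
  intro M _
  rw [Matrix.matrix_eq_sum_single M]
  refine S.sum_mem fun i _ => S.sum_mem fun j _ => ?_
  have := S.smul_mem (hs i j) (M i j)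
  simpa [Matrix.smul_single] using this

lemma ddf_line {F : Type*} [Field F] {g n : ℕ} (A : Fin g → Matrix (Fin n) (Fin n) F)
    (f : FreeAlgebra F (Fin g)) :
    ∃ P : Polynomial F, ∀ t : F, Matrix.trace (FreeAlgebra.lift F (t • A) f) = P.eval t := by
  let B : Fin g → Matrix (Fin n) (Fin n) (Polynomial F) := fun i =>
    (A i).map (fun x => Polynomial.X * Polynomial.C x)
  refine ⟨Matrix.trace (FreeAlgebra.lift F B f), fun t => ?_⟩
  have : FreeAlgebra.lift F (t • A) =
      ((Polynomial.aeval t : Polynomial F →ₐ[F] F).mapMatrix).comp (FreeAlgebra.lift F B) := by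
    ext i a b
    simp [B]
    ring
  rw [this]
  simp [Matrix.trace, Polynomial.eval_finsetSum]

lemma ddf_cyc {F : Type*} [Field F] {g n : ℕ} (A : Fin g → Matrix (Fin n) (Fin n) F)
    (f h : FreeAlgebra F (Fin g)) (hc : CycEq f h) :
    Matrix.trace (FreeAlgebra.lift F A f) = Matrix.trace (FreeAlgebra.lift F A h) := by
  have hle : Submodule.span F
    {x : FreeAlgebra F (Fin g) | ∃ p q : FreeAlgebra F (Fin g), x = p * q - q * p} ≤
      LinearMap.ker ((Matrix.traceLinearMap (Fin n) F F).comp (FreeAlgebra.lift F A).toLinearMap) := by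
    rw [Submodule.span_le]
    rintro x ⟨p, q, rfl⟩
    simp [Matrix.trace_mul_comm (FreeAlgebra.lift F A p)]
  have := hle hc
  simpa [sub_eq_zero] using this

theorem dimension_dependent_failure {F : Type*} [Field F] [IsAlgClosed F] [CharZero F]
    (g : ℕ) (hg : 2 ≤ g) (n : ℕ) (hn : 0 < n) :
    ∃ f₁ f₂ : FreeAlgebra F (Fin g),
      (∀ A : Fin g → Matrix (Fin n) (Fin n) F,
        Matrix.trace (FreeAlgebra.lift F A f₁) ≠ 0 ∨
        Matrix.trace (FreeAlgebra.lift F A f₂) ≠ 0) ∧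
      ¬ ∃ (lam₁ lam₂ : F) (p : FreeAlgebra F (Fin g)),
          (∀ A : Fin g → Matrix (Fin n) (Fin n) F, FreeAlgebra.lift F A p = 0) ∧
          CycEq (lam₁ • f₁ + lam₂ • f₂) (1 + p) := by
  have hnF : (n : F) ≠ 0 := by exact_mod_cast hn.ne'
  obtain ⟨A₀, hA0, hsurj⟩ := ddf_surj (F := F) g hg n
  obtain ⟨m, hm⟩ : ∃ m, n * n = m + 1 := ⟨n * n - 1, by have := Nat.mul_pos hn hn; omega⟩
  let e' : Fin n × Fin n ≃ Fin (m+1) := finProdFinEquiv.trans (finCongr hm)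
  let e := e'.symm
  choose w hw using fun k : Fin (m+1) => hsurj (Matrix.single (e k).1 (e k).2 (1:F))
  choose u hu using fun k : Fin (m+1) => hsurj
    (Matrix.diagonal (fun i : Fin n => ((i : F) + 1)⁻¹) *
      Matrix.single (e k).2 (e (k+1)).1 (1:F))
  let v : Fin (m+1) → FreeAlgebra F (Fin g) := fun k => FreeAlgebra.ι F ⟨0, by omega⟩ * u k
  have hv : ∀ k, FreeAlgebra.lift F A₀ (v k) = Matrix.single (e k).2 (e (k+1)).1 (1:F) := by
    intro k
    simp only [v, map_mul, FreeAlgebra.lift_ι_apply, hA0, hu]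
    rw [← mul_assoc, Matrix.diagonal_mul_diagonal]
    have : (fun i : Fin n => ((i : F) + 1) * ((i : F) + 1)⁻¹) = 1 := by
      ext i
      exact mul_inv_cancel₀ (Nat.cast_add_one_ne_zero _)
    rw [this]; simp
  let c : FreeAlgebra F (Fin g) := ddfCap (F := F) v w
  let h : FreeAlgebra F (Fin g) := ∑ k, ddfCap (F := F) v (Function.update w k (c * w k))
  have hγ0 : Matrix.trace (FreeAlgebra.lift F (0 : Fin g → Matrix (Fin n) (Fin n) F) c) = 0 := by
    have : FreeAlgebra.lift F (0 : Fin g → Matrix (Fin n) (Fin n) F) c = 0 := by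
      simp only [c]
      rw [ddfCap_map, ddfCap_apply]
      refine Finset.sum_eq_zero fun σ _ => ?_
      rw [List.ofFn_succ, List.prod_cons]
      simp [v]
    rw [this]; simp
  have hγ1 : Matrix.trace (FreeAlgebra.lift F A₀ c) = 1 := by
    simp only [c]
    rw [ddfCap_map]
    convert ddf_cap_one (F := F) e using 3
    · congr 1
      ext1 k; exact hv k
    · ext1 k; exact hw k
  have htr : ∀ A : Fin g → Matrix (Fin n) (Fin n) F, Matrix.trace (FreeAlgebra.lift F A h) =
      n * (Matrix.trace (FreeAlgebra.lift F A c)) ^ 2 := by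
    intro A
    set φ := FreeAlgebra.lift F A
    let f : (Matrix (Fin n) (Fin n) F) [⋀^Fin (m+1)]→ₗ[F] F :=
      (Matrix.traceLinearMap (Fin n) F F).compAlternatingMap (ddfCap (F := F) (φ ∘ v))
    have hc : Matrix.trace (φ c) = f (φ ∘ w) := by
      simp only [c]; rw [ddfCap_map]; rfl
    have hh : Matrix.trace (φ h) =
        ∑ k, f (Function.update (φ ∘ w) k (LinearMap.mulLeft F (φ c) ((φ ∘ w) k))) := by
      simp only [h]
      rw [map_sum, Matrix.trace_sum]
      refine Finset.sum_congr rfl fun k _ => ?_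
      rw [ddfCap_map, Function.comp_update]
      simp [f]
    have hb := ddf_altTrace ((Matrix.stdBasis F (Fin n) (Fin n)).reindex e') f
      (LinearMap.mulLeft F (φ c)) (φ ∘ w)
    have htm : ∑ k, ((Matrix.stdBasis F (Fin n) (Fin n)).reindex e').repr
      (LinearMap.mulLeft F (φ c) (((Matrix.stdBasis F (Fin n) (Fin n)).reindex e') k)) k
      = n * (φ c).trace := by
      rw [← ddf_trMul, ← e'.sum_comp, ← finProdFinEquiv.sum_comp]
      simp
    rw [hh, hb, htm, ← hc]
    ring
  refine ⟨c, 1 - h, ?_, ?_⟩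
  · intro A
    by_cases h0 : Matrix.trace (FreeAlgebra.lift F A c) = 0
    · right
      rw [map_sub, Matrix.trace_sub, htr, h0]
      simpa using hnF
    · exact Or.inl h0
  · rintro ⟨l1, l2, p, hp, hcyc⟩
    have key : ∀ A : Fin g → Matrix (Fin n) (Fin n) F,
        l1 * Matrix.trace (FreeAlgebra.lift F A c) +
          l2 * (n - n * (Matrix.trace (FreeAlgebra.lift F A c)) ^ 2) = n := by
      intro A
      have := ddf_cyc A _ _ hcyc
      simpa [hp A, htr] using this
    obtain ⟨P, hP⟩ := ddf_line A₀ c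
    have hP0 : P.eval 0 = 0 := by rw [← hP, zero_smul, hγ0]
    have hP1 : P.eval 1 = 1 := by rw [← hP, one_smul, hγ1]
    obtain ⟨t, ht⟩ := IsAlgClosed.exists_root (P - Polynomial.C 2) (by
      intro hd
      obtain hd := Polynomial.eq_C_of_degree_eq_zero hd
      have h0 := congrArg (Polynomial.eval 0) hd
      have h1 := congrArg (Polynomial.eval 1) hd
      simp only [Polynomial.eval_sub, Polynomial.eval_C, hP0, hP1] at h0 h1
      have := h1.trans h0.symm
      norm_num at this)
    have hPt : P.eval t = 2 := by
      simpa [Polynomial.IsRoot, sub_eq_zero] using ht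
    have k0 := key 0
    have k1 := key A₀
    have k2 := key (t • A₀)
    rw [hγ0] at k0
    rw [hγ1] at k1
    rw [hP, hPt] at k2
    have : (2 : F) * n = 0 := by linear_combination 2 * k1 - k2 - 3 * k0
    exact hnF (by simpa using this)
end

section
/- Let F be an algebraically closed field of characteristic 0, let n ∈ ℕ, and let f ∈ F⟨X⟩ with deg f ≤ n. If tr(f(A)) = 0 for every A ∈ Mₙ(F)^g, then f is a sum of commutators in F⟨X⟩, i.e., f lies in the F-linear span of elements pq − qp with p, q ∈ F⟨X⟩. -/
/-- The subspace of the free algebra spanned by words of length at most `d`. -/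
def wordSpan (F : Type*) [Field F] (g d : ℕ) : Submodule F (FreeAlgebra F (Fin g)) :=
  Submodule.span F
    {x : FreeAlgebra F (Fin g) |
      ∃ w : List (Fin g), w.length ≤ d ∧ x = (w.map (FreeAlgebra.ι F)).prod}

open Finset in
theorem aux_repr {F : Type*} [Field F] (g n : ℕ) (f : FreeAlgebra F (Fin g))
    (hdeg : f ∈ wordSpan F g n) :
    ∃ c : ∀ d : ℕ, (Fin d → Fin g) → F,
      f = ∑ d ∈ range (n+1), ∑ v : Fin d → Fin g,
        c d v • (List.ofFn (fun k => FreeAlgebra.ι F (v k))).prod := by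
  classical
  unfold wordSpan at hdeg
  induction hdeg using Submodule.span_induction with
  | mem x hx =>
    obtain ⟨w, hw, rfl⟩ := hx
    refine ⟨fun d v => if List.ofFn v = w then 1 else 0, ?_⟩
    rw [Finset.sum_eq_single w.length]
    · rw [Finset.sum_eq_single w.get]
      · have h : List.ofFn w.get = w := List.ofFn_get w
        beta_reduce; rw [if_pos h, one_smul]
        conv_lhs => rw [← h, List.map_ofFn]
        rfl
      · intro v _ hv
        beta_reduce; rw [if_neg, zero_smul]
        intro h
        apply hv
        apply List.ofFn_injective
        rw [h]; exact (List.ofFn_get w).symm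
      · simp
    · intro d _ hd
      apply Finset.sum_eq_zero
      intro v _
      beta_reduce; rw [if_neg, zero_smul]
      rintro rfl
      simp at hd
    · intro h
      exact absurd (Finset.mem_range.2 (by omega)) h
  | zero => exact ⟨fun _ _ => 0, by simp⟩
  | add x y _ _ hx hy =>
    obtain ⟨c, rfl⟩ := hx
    obtain ⟨c', rfl⟩ := hy
    exact ⟨fun d v => c d v + c' d v, by simp [add_smul, Finset.sum_add_distrib]⟩
  | smul a x _ hx =>
    obtain ⟨c, rfl⟩ := hx
    exact ⟨fun d v => a * c d v, by simp [mul_smul, Finset.smul_sum]⟩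

/-- separation of homogeneous components -/
theorem aux_sep {F : Type*} [Field F] [CharZero F] (n : ℕ) (a : ℕ → F)
    (h : ∀ t : F, ∑ d ∈ Finset.range (n+1), t ^ d * a d = 0) (d : ℕ) (hd : d ≤ n) : a d = 0 := by
  have hp : (∑ d ∈ Finset.range (n+1), Polynomial.monomial d (a d)) = 0 := by
    apply Polynomial.funext
    intro t
    rw [Polynomial.eval_finsetSum]
    simp only [Polynomial.eval_monomial, Polynomial.eval_zero]
    rw [← h t]
    exact Finset.sum_congr rfl fun d _ => mul_comm _ _
  have := congrArg (fun p => Polynomial.coeff p d) hp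
  simp only [Polynomial.finsetSum_coeff, Polynomial.coeff_monomial, Polynomial.coeff_zero] at this
  rw [Finset.sum_ite_eq' ] at this
  simpa [Nat.lt_succ_iff, hd] using this

theorem aux_smul {F : Type*} [Field F] {R : Type*} [Ring R] [Algebra F R] (t : F) (d : ℕ)
    (B : Fin d → R) :
    (List.ofFn (fun k => t • B k)).prod = t ^ d • (List.ofFn B).prod := by
  induction d with
  | zero => simp
  | succ d ih =>
    simp only [List.ofFn_succ, List.prod_cons]
    rw [ih (fun i => B i.succ)]
    rw [smul_mul_smul_comm, pow_succ']

theorem aux_lift {F : Type*} [Field F] {R : Type*} [Ring R] [Algebra F R] (g d : ℕ)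
    (A : Fin g → R) (v : Fin d → Fin g) :
    FreeAlgebra.lift F A (List.ofFn (fun k => FreeAlgebra.ι F (v k))).prod
      = (List.ofFn (fun k => A (v k))).prod := by
  rw [map_list_prod, List.map_ofFn]
  congr 2
  funext k
  simp

/-- the cycle matrices -/
def cyc (F : Type*) [Field F] (g n m : ℕ) (w : ℕ → Fin g) (i : Fin g) :
    Matrix (Fin n) (Fin n) F :=
  fun a b => if (a : ℕ) < m + 1 ∧ w a = i ∧ (b : ℕ) = (a + 1) % (m + 1) then 1 else 0

theorem cyc_mul {F : Type*} [Field F] (g n m : ℕ) (hm : m + 1 ≤ n) (w : ℕ → Fin g)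
    (i : Fin g) (P : Matrix (Fin n) (Fin n) F) (s : ℕ) (b : Fin n) :
    (cyc F g n m w i * P) ⟨s % (m+1), (Nat.mod_lt _ (Nat.succ_pos m)).trans_le hm⟩ b
      = if w (s % (m+1)) = i then
          P ⟨(s+1) % (m+1), (Nat.mod_lt _ (Nat.succ_pos m)).trans_le hm⟩ b else 0 := by
  rw [Matrix.mul_apply,
    Finset.sum_eq_single ⟨(s+1) % (m+1), (Nat.mod_lt _ (Nat.succ_pos m)).trans_le hm⟩]
  · have := Nat.mod_lt s (Nat.succ_pos m)
    simp [cyc, this]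
  · intro c _ hc
    have : ¬ ((c : ℕ) = (s+1) % (m+1)) := fun h => hc (Fin.ext h)
    simp [cyc, this]
  · simp

theorem cyc_prod {F : Type*} [Field F] (g n m : ℕ) (hm : m + 1 ≤ n) (w : ℕ → Fin g)
    (d : ℕ) (v : Fin d → Fin g) (s : ℕ) (b : Fin n) :
    (List.ofFn (fun k => cyc F g n m w (v k))).prod
        ⟨s % (m+1), (Nat.mod_lt _ (Nat.succ_pos m)).trans_le hm⟩ b
      = if (∀ k : Fin d, w ((s + k) % (m+1)) = v k) ∧ (b : ℕ) = (s + d) % (m+1)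
        then 1 else 0 := by
  induction d generalizing s with
  | zero =>
    simp [Matrix.one_apply, Fin.ext_iff, eq_comm]
  | succ d ih =>
    rw [List.ofFn_succ, List.prod_cons, cyc_mul g n m hm, ih]
    rw [← ite_and]
    congr 1
    simp only [Fin.forall_fin_succ, Fin.val_zero, Fin.val_succ, add_zero, and_assoc,
      add_assoc, add_comm 1]

theorem cyc_trace {F : Type*} [Field F] (g n m : ℕ) (hm : m + 1 ≤ n) (w v : Fin (m+1) → Fin g) :
    Matrix.trace (List.ofFn (fun k => cyc F g n m (fun s => w (Fin.ofNat (m+1) s)) (v k))).prod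
      = ∑ j : Fin (m+1), if v = (fun k => w (k + j)) then (1:F) else 0 := by
  have h2 : ∀ a : Fin n, ¬ (a : ℕ) < m + 1 →
    (List.ofFn (fun k => cyc F g n m (fun s => w (Fin.ofNat (m+1) s)) (v k))).prod a a = 0 := by
    intro a ha
    rw [List.ofFn_succ, List.prod_cons, Matrix.mul_apply]
    apply Finset.sum_eq_zero
    intro c _
    simp [cyc, ha]
  unfold Matrix.trace
  simp only [Matrix.diag_apply]
  symm
  apply Finset.sum_of_injOn (Fin.castLE hm)
  · exact (Fin.castLE_injective hm).injOn
  · simp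
  · intro a _ ha
    apply h2
    intro h
    exact ha ⟨⟨a, h⟩, by simp, rfl⟩
  · intro j _
    have := cyc_prod (F := F) g n m hm (fun s => w (Fin.ofNat (m+1) s)) (m+1) v j (Fin.castLE hm j)
    have e : (⟨(j:ℕ) % (m+1), (Nat.mod_lt _ (Nat.succ_pos m)).trans_le hm⟩ : Fin n)
        = Fin.castLE hm j := by
      ext; simp [Nat.mod_eq_of_lt j.2]
    rw [e] at this
    rw [this]
    congr 1
    rw [eq_iff_iff]
    constructor
    · rintro rfl
      refine ⟨fun k => ?_, ?_⟩
      · congr 1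
        ext
        simp [Fin.val_add, add_comm]
      · simp [Nat.mod_eq_of_lt j.2]
    · rintro ⟨h, -⟩
      funext k
      rw [← h k]
      congr 1
      ext
      simp [Fin.val_add, add_comm]

theorem aux_rot {F : Type*} [Field F] (g m : ℕ) (S : Submodule F (FreeAlgebra F (Fin g)))
    (hS : ∀ p q : FreeAlgebra F (Fin g), p * q - q * p ∈ S) (j : ℕ) (v : Fin (m+1) → Fin g) :
    (List.ofFn (fun k => FreeAlgebra.ι F (v k))).prod
      - (List.ofFn (fun k : Fin (m+1) => FreeAlgebra.ι F (v (k + Fin.ofNat (m+1) j)))).prod ∈ S := by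
  induction j generalizing v with
  | zero => simp
  | succ j ih =>
    have h1 := ih (fun k => v (k + 1))
    have h2 : (List.ofFn (fun k => FreeAlgebra.ι F (v k))).prod
      - (List.ofFn (fun k : Fin (m+1) => FreeAlgebra.ι F (v (k + 1)))).prod ∈ S := by
      rw [List.ofFn_succ, List.ofFn_succ' (f := fun k : Fin (m+1) => FreeAlgebra.ι F (v (k + 1)))]
      simp only [List.concat_eq_append, List.prod_append, List.prod_cons, List.prod_nil, mul_one,
        Fin.last_add_one, Fin.coeSucc_eq_succ]
      exact hS _ _
    have h3 := S.add_mem h2 h1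
    rw [sub_add_sub_cancel] at h3
    convert h3 using 7
    rw [add_assoc]
    congr 1
    ext
    simp [Fin.val_add]

theorem trace_zero_of_low_degree {F : Type*} [Field F] [IsAlgClosed F] [CharZero F]
    (g n : ℕ) (hn : 0 < n) (f : FreeAlgebra F (Fin g))
    (hdeg : f ∈ wordSpan F g n)
    (htr : ∀ A : Fin g → Matrix (Fin n) (Fin n) F,
      Matrix.trace (FreeAlgebra.lift F A f) = 0) :
    f ∈ Submodule.span F
      {x : FreeAlgebra F (Fin g) | ∃ p q : FreeAlgebra F (Fin g), x = p * q - q * p} := by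
  classical
  obtain ⟨c, rfl⟩ := aux_repr g n f hdeg
  have key : ∀ (A : Fin g → Matrix (Fin n) (Fin n) F) (d : ℕ), d ≤ n →
      ∑ v : Fin d → Fin g, c d v * Matrix.trace (List.ofFn (fun k => A (v k))).prod = 0 := by
    intro A
    apply aux_sep n
    intro t
    rw [← htr (fun i => t • A i)]
    simp only [map_sum, map_smul, aux_lift, aux_smul, Matrix.trace_sum, Matrix.trace_smul,
      Finset.mul_sum, smul_eq_mul]
    refine Finset.sum_congr rfl fun d _ => Finset.sum_congr rfl fun v _ => ?_
    ring
  set S := Submodule.span F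
      {x : FreeAlgebra F (Fin g) | ∃ p q : FreeAlgebra F (Fin g), x = p * q - q * p} with hSdef
  have hS : ∀ p q : FreeAlgebra F (Fin g), p * q - q * p ∈ S :=
    fun p q => Submodule.subset_span ⟨p, q, rfl⟩
  apply Submodule.sum_mem
  intro d hd
  have hd' : d ≤ n := by simpa [Nat.lt_succ_iff] using hd
  cases d with
  | zero =>
    have h := key 0 0 hd'
    have h0 : ∀ v, c 0 v = 0 := by
      intro v
      simp only [Finset.univ_unique, Finset.sum_singleton, List.ofFn_zero, List.prod_nil,
        Matrix.trace_one, Fintype.card_fin, mul_eq_zero, Nat.cast_eq_zero, hn.ne', or_false] at h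
      rw [← h]; congr 1; exact Subsingleton.elim _ _
    simp [h0]
  | succ m =>
    have hc : ∀ w : Fin (m+1) → Fin g, ∑ j : Fin (m+1), c (m+1) (fun k => w (k + j)) = 0 := by
      intro w
      have h := key (cyc F g n m (fun s => w (Fin.ofNat (m+1) s))) (m+1) hd'
      simp only [cyc_trace g n m hd', Finset.mul_sum] at h
      rw [Finset.sum_comm] at h
      simpa using h
    have hm0 : ((m+1 : ℕ) : F) ≠ 0 := Nat.cast_ne_zero.2 (Nat.succ_ne_zero m)
    rw [← S.smul_mem_iff hm0]
    set W : (Fin (m+1) → Fin g) → FreeAlgebra F (Fin g) :=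
      fun v => (List.ofFn (fun k => FreeAlgebra.ι F (v k))).prod with hW
    have hsum : ∑ j : Fin (m+1), ∑ v : Fin (m+1) → Fin g,
        c (m+1) v • W (fun k => v (k + -j)) = 0 := by
      have : ∀ j : Fin (m+1), ∑ v : Fin (m+1) → Fin g, c (m+1) v • W (fun k => v (k + -j))
          = ∑ v : Fin (m+1) → Fin g, c (m+1) (fun k => v (k + j)) • W v := by
        intro j
        symm
        apply Fintype.sum_equiv ((Equiv.addRight (-j)).arrowCongr (Equiv.refl (Fin g)))
        intro v
        have e : ((Equiv.addRight (-j)).arrowCongr (Equiv.refl (Fin g))) v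
          = fun k => v (k + j) := by
          funext k; simp [Equiv.arrowCongr]
        rw [e]
        simp
      simp only [this]
      rw [Finset.sum_comm]
      simp only [← Finset.sum_smul, hc, zero_smul, Finset.sum_const_zero]
    have : ((m+1 : ℕ) : F) • ∑ v : Fin (m+1) → Fin g, c (m+1) v • W v
        = ∑ j : Fin (m+1), ∑ v : Fin (m+1) → Fin g,
          c (m+1) v • (W v - W (fun k => v (k + -j))) := by
      simp only [smul_sub, Finset.sum_sub_distrib, hsum, sub_zero]
      simp only [Finset.sum_const, Finset.card_univ, Fintype.card_fin]
      rw [Nat.cast_smul_eq_nsmul]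
    change ((m+1 : ℕ) : F) • ∑ v : Fin (m+1) → Fin g, c (m+1) v • W v ∈ S
    rw [this]
    refine S.sum_mem fun j _ => S.sum_mem fun v _ => S.smul_mem _ ?_
    have := aux_rot g m S hS ((-j : Fin (m+1)) : ℕ) v
    simpa [hW] using this
end

section
/- Let d ∈ ℕ and let L : ℝ⟨X⟩_d → ℝ be a tracial linear functional. Then there exist finitely many scalars λ₁, …, λ_k ∈ ℝ, sizes n₁, …, n_k ∈ ℕ, and tuples A_ℓ ∈ M_{n_ℓ}(ℝ)^g such that L(p) = Σ_{ℓ=1}^k λ_ℓ · tr(p(A_ℓ)) for every p ∈ ℝ⟨X⟩_d; that is, L lies in the linear span of the functionals φ_A. -/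
lemma word_mem_wordSpan (F : Type*) [Field F] {g d : ℕ} (w : List (Fin g))
    (hw : w.length ≤ d) : (w.map (FreeAlgebra.ι F)).prod ∈ wordSpan F g d :=
  Submodule.subset_span ⟨w, hw, rfl⟩

/-- A linear functional on `F⟨X⟩_d` is tracial if `L (u * v) = L (v * u)` for all
words `u, v` with `|u| + |v| ≤ d`. -/
def IsTracial {F : Type*} [Field F] {g d : ℕ} (L : wordSpan F g d →ₗ[F] F) : Prop :=
  ∀ (u v : List (Fin g)) (h : u.length + v.length ≤ d),
    L ⟨((u ++ v).map (FreeAlgebra.ι F)).prod,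
        word_mem_wordSpan F (u ++ v) (by rw [List.length_append]; exact h)⟩ =
    L ⟨((v ++ u).map (FreeAlgebra.ι F)).prod,
        word_mem_wordSpan F (v ++ u) (by rw [List.length_append]; omega)⟩

/-- trace functional on words -/
noncomputable def trWord {g : ℕ} (P : Σ n : ℕ, Fin g → Matrix (Fin n) (Fin n) ℝ) :
    List (Fin g) → ℝ := fun v => Matrix.trace ((v.map P.2).prod)

/-- cyclic walk matrices -/
def cycMat {g n : ℕ} (w : Fin (n+1) → Fin g) (j : Fin g) :
    Matrix (Fin (n+1)) (Fin (n+1)) ℝ :=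
  Matrix.of fun a b => if b = a + 1 ∧ w a = j then 1 else 0

/-- reading the word along the cycle -/
def Reads {g n : ℕ} (w : Fin (n+1) → Fin g) : List (Fin g) → Fin (n+1) → Prop
  | [], _ => True
  | j :: v, a => w a = j ∧ Reads w v (a+1)

open Classical in
lemma cycMat_prod {g n : ℕ} (w : Fin (n+1) → Fin g) (v : List (Fin g)) :
    ∀ a b, ((v.map (cycMat w)).prod) a b =
      if b = a + (Fin.ofNat (n+1) v.length) ∧ Reads w v a then 1 else 0 := by
  induction v with
  | nil =>
    intro a b
    have h0 : (Fin.ofNat (n+1) 0) = 0 := rfl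
    simp [Reads, Matrix.one_apply, eq_comm, h0]
  | cons j v ih =>
    intro a b
    have h1 : Fin.ofNat (n+1) (v.length + 1) = 1 + Fin.ofNat (n+1) v.length := by
      apply Fin.ext
      simp [Fin.val_add, Nat.add_comm]
    rw [List.map_cons, List.prod_cons, Matrix.mul_apply]
    rw [Finset.sum_eq_single (a+1)]
    · rw [ih]
      simp only [cycMat, Matrix.of_apply, Reads, List.length_cons, h1, add_assoc, true_and]
      by_cases h : w a = j <;> simp [h]
    · intro c _ hc
      simp [cycMat, hc]
    · simp

lemma reads_iff {g n : ℕ} (w : Fin (n+1) → Fin g) (v : List (Fin g)) :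
    ∀ a, Reads w v a ↔ ∀ (i : ℕ) (h : i < v.length), v[i] = w (a + Fin.ofNat (n+1) i) := by
  induction v with
  | nil => intro a; simp [Reads]
  | cons j v ih =>
    intro a
    have h0 : (Fin.ofNat (n+1) 0) = 0 := rfl
    have h1 : ∀ i, Fin.ofNat (n+1) (i + 1) = 1 + Fin.ofNat (n+1) i := by
      intro i
      apply Fin.ext
      simp [Fin.val_add, Nat.add_comm]
    rw [Reads, ih]
    constructor
    · rintro ⟨h, h'⟩ i hi
      cases i with
      | zero => simp [h0, h]
      | succ i =>
        rw [h1, ← add_assoc]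
        simpa using h' i (by simpa using hi)
    · intro h
      refine ⟨by
        have h3 : j = w (a + 0) := h 0 (Nat.succ_pos _)
        rw [h3, add_zero], fun i hi => ?_⟩
      have := h (i+1) (by simpa using hi)
      rw [h1, ← add_assoc] at this
      simpa using this

lemma reads_iff_ofFn {g n : ℕ} (w : Fin (n+1) → Fin g) (v : List (Fin g))
    (hv : v.length = n+1) (a : Fin (n+1)) :
    Reads w v a ↔ v = List.ofFn (fun i => w (a + i)) := by
  rw [reads_iff]
  constructor
  · intro h
    apply List.ext_getElem
    · simp [hv]
    · intro i h1 h2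
      rw [h i h1, List.getElem_ofFn]
      congr 2
      apply Fin.ext
      simp [Nat.mod_eq_of_lt (hv ▸ h1)]
  · intro h i hi
    have h2 : i < (List.ofFn (fun i => w (a + i))).length := by simp; omega
    have : v[i] = (List.ofFn (fun i => w (a + i)))[i] := by simp only [← h]
    rw [this, List.getElem_ofFn]
    congr 2
    apply Fin.ext
    simp [Nat.mod_eq_of_lt (hv ▸ hi)]

lemma f_shift {g n : ℕ} (f : List (Fin g) → ℝ) (hf : ∀ u v, f (u ++ v) = f (v ++ u))
    (w : Fin (n+1) → Fin g) (k : ℕ) :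
    f (List.ofFn (fun i => w (Fin.ofNat (n+1) k + i))) = f (List.ofFn w) := by
  induction k generalizing w with
  | zero =>
    have h0 : (Fin.ofNat (n+1) 0) = 0 := rfl
    simp [h0]
  | succ k ih =>
    have h1 : Fin.ofNat (n+1) (k + 1) = 1 + Fin.ofNat (n+1) k := by
      apply Fin.ext
      simp [Fin.val_add, Nat.add_comm]
    have := ih (fun i => w (1 + i))
    simp only [h1, add_assoc]
    rw [this, List.ofFn_succ' , List.ofFn_succ (f := w), List.concat_eq_append, hf]
    congr 1
    have : (1 : Fin (n+1)) + Fin.last n = 0 := by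
      rw [add_comm (1 : Fin (n+1)) (Fin.last n)]; simp
    simp [this, add_comm]

lemma trWord_tracial {g : ℕ} (P : Σ n : ℕ, Fin g → Matrix (Fin n) (Fin n) ℝ)
    (u v : List (Fin g)) : trWord P (u ++ v) = trWord P (v ++ u) := by
  simp only [trWord, List.map_append, List.prod_append]
  exact Matrix.trace_mul_comm _ _

lemma trWord_cyc_short {g n : ℕ} (w : Fin (n+1) → Fin g) (v : List (Fin g))
    (hv : v.length < n+1) (hv0 : v ≠ []) : trWord ⟨n+1, cycMat w⟩ v = 0 := by
  classical
  simp only [trWord, Matrix.trace, Matrix.diag_apply, cycMat_prod]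
  apply Finset.sum_eq_zero
  intro a _
  rw [if_neg]
  rintro ⟨h, -⟩
  have h2 : Fin.ofNat (n+1) v.length = 0 := by simpa using h.symm
  have := congrArg Fin.val h2
  simp [Nat.mod_eq_of_lt hv, hv0] at this

lemma trWord_cyc_sum {g n : ℕ} (f : List (Fin g) → ℝ) (hf : ∀ u v, f (u ++ v) = f (v ++ u))
    (v : List (Fin g)) (hv : v.length = n+1) :
    ∑ w : Fin (n+1) → Fin g, f (List.ofFn w) * trWord ⟨n+1, cycMat w⟩ v = (n+1) * f v := by
  classical
  have hz : Fin.ofNat (n+1) v.length = 0 := by apply Fin.ext; simp [hv]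
  have ht : ∀ w : Fin (n+1) → Fin g, trWord ⟨n+1, cycMat w⟩ v =
      ∑ a : Fin (n+1), if v = List.ofFn (fun i => w (a + i)) then (1:ℝ) else 0 := by
    intro w
    simp only [trWord, Matrix.trace, Matrix.diag_apply, cycMat_prod, hz, add_zero, true_and,
      reads_iff_ofFn _ v hv]
  simp only [ht, Finset.mul_sum]
  rw [Finset.sum_comm]
  have key : ∀ a : Fin (n+1), ∑ w : Fin (n+1) → Fin g,
      f (List.ofFn w) * (if v = List.ofFn (fun i => w (a + i)) then (1:ℝ) else 0) = f v := by
    intro a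
    rw [Finset.sum_eq_single (fun i => v[(i - a : Fin (n+1)).val]'(by rw [hv]; exact Fin.is_lt _))]
    · have e : v = List.ofFn (fun i : Fin (n+1) =>
          (fun i => v[(i - a : Fin (n+1)).val]'(by rw [hv]; exact Fin.is_lt _)) (a + i)) := by
        apply List.ext_getElem
        · simp [hv]
        · intro i h1 h2
          rw [List.getElem_ofFn]
          simp only [add_sub_cancel_left]
      rw [if_pos e, mul_one]
      have := f_shift f hf (fun i => v[(i - a : Fin (n+1)).val]'(by rw [hv]; exact Fin.is_lt _)) a.val
      rw [← this]
      have ha : Fin.ofNat (n+1) a.val = a := by apply Fin.ext; simp [Nat.mod_eq_of_lt]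
      rw [ha]
      exact congrArg f e.symm
    · intro w _ hw
      rw [if_neg, mul_zero]
      intro h
      apply hw
      funext i
      simp only [h, List.getElem_ofFn]
      congr 1
      simp
    · simp
  rw [Finset.sum_congr rfl (fun a _ => key a)]
  simp

lemma main_claim {g d : ℕ} (k : ℕ) : ∀ m, d + 1 ≤ m + k → ∀ f : List (Fin g) → ℝ,
    (∀ u v, f (u ++ v) = f (v ++ u)) → (∀ v, v.length < m → f v = 0) →
    ∃ h ∈ Submodule.span ℝ (Set.range (trWord (g := g))), ∀ v, v.length ≤ d → f v = h v := by
  induction k with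
  | zero =>
    intro m hm f _ h0
    exact ⟨0, Submodule.zero_mem _, fun v hv => by simpa using h0 v (by omega)⟩
  | succ k ih =>
    intro m hm f hf h0
    have step : ∃ h ∈ Submodule.span ℝ (Set.range (trWord (g := g))),
        (∀ u v, h (u ++ v) = h (v ++ u)) ∧ ∀ v, v.length < m + 1 → f v = h v := by
      cases m with
      | zero =>
        refine ⟨f [] • trWord ⟨1, 0⟩, Submodule.smul_mem _ _ (Submodule.subset_span ⟨_, rfl⟩),
          fun u v => ?_, fun v hv => ?_⟩
        · simp [trWord_tracial _ u v]
        · have : v = [] := List.length_eq_zero_iff.mp (by omega)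
          subst this
          simp [trWord]
      | succ n =>
        -- correct the empty word contribution with a zero matrix of size one
        refine ⟨∑ w : Fin (n+1) → Fin g, ((n+1 : ℝ)⁻¹ * f (List.ofFn w)) •
            (trWord ⟨n+1, cycMat w⟩ - ((n+1 : ℕ) : ℝ) • trWord ⟨1, 0⟩), ?_, fun u v => ?_, fun v hv => ?_⟩
        · exact Submodule.sum_mem _ fun w _ => Submodule.smul_mem _ _ (Submodule.sub_mem _
            (Submodule.subset_span ⟨_, rfl⟩) (Submodule.smul_mem _ _ (Submodule.subset_span ⟨_, rfl⟩)))
        · simp [trWord_tracial _ u v]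
        · have hz : v ≠ [] → trWord (g := g) ⟨1, 0⟩ v = 0 := by
            intro hv0
            cases v with
            | nil => exact absurd rfl hv0
            | cons j v => simp [trWord]
          by_cases hv0 : v = []
          · subst hv0
            rw [h0 _ (by simp)]
            simp [trWord]
          · by_cases hv1 : v.length = n+1
            · have := trWord_cyc_sum f hf v hv1
              simp only [Finset.sum_apply, Pi.smul_apply, Pi.sub_apply, smul_eq_mul, hz hv0,
                mul_zero, sub_zero, mul_assoc]
              rw [← Finset.mul_sum, this, ← mul_assoc, inv_mul_cancel₀ (by positivity), one_mul]
            · have hl : v.length < n+1 := by omega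
              rw [h0 _ hl]
              simp [hz hv0, trWord_cyc_short _ v hl hv0]
    obtain ⟨h, hS, ht, he⟩ := step
    obtain ⟨h', hS', he'⟩ := ih (m+1) (by omega) (f - h)
      (fun u v => by simp [hf u v, ht u v]) (fun v hv => by simp [he v hv])
    refine ⟨h + h', Submodule.add_mem _ hS hS', fun v hv => ?_⟩
    have := he' v hv
    simp only [Pi.sub_apply] at this
    simp only [Pi.add_apply, ← this]
    ring

/-- Every tracial linear functional on `ℝ⟨X⟩_d` is a linear combination of the
functionals `p ↦ tr (p A)` for tuples of real matrices `A`. -/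
theorem tracial_functional_is_combination_of_traces (g d : ℕ)
    (L : wordSpan ℝ g d →ₗ[ℝ] ℝ) (hL : IsTracial L) :
    ∃ (k : ℕ) (lam : Fin k → ℝ) (sz : Fin k → ℕ)
      (A : (ℓ : Fin k) → Fin g → Matrix (Fin (sz ℓ)) (Fin (sz ℓ)) ℝ),
      ∀ p : wordSpan ℝ g d,
        L p = ∑ ℓ : Fin k,
          lam ℓ * Matrix.trace (FreeAlgebra.lift ℝ (A ℓ) (p : FreeAlgebra ℝ (Fin g))) := by

  classical
  obtain ⟨h, hS, he⟩ := main_claim (g := g) (d := d) (d+1) 0 (by omega)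
    (fun v => if hv : v.length ≤ d then L ⟨(v.map (FreeAlgebra.ι ℝ)).prod,
      word_mem_wordSpan ℝ v hv⟩ else 0)
    (by
      intro u v
      by_cases huv : u.length + v.length ≤ d
      · have h1 : (u ++ v).length ≤ d := by rw [List.length_append]; exact huv
        have h2 : (v ++ u).length ≤ d := by rw [List.length_append]; omega
        rw [dif_pos h1, dif_pos h2]
        exact hL u v huv
      · have h1 : ¬ (u ++ v).length ≤ d := by rw [List.length_append]; exact huv
        have h2 : ¬ (v ++ u).length ≤ d := by rw [List.length_append]; omega
        rw [dif_neg h1, dif_neg h2])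
    (by intro v hv; omega)
  rw [Submodule.mem_span_set'] at hS
  obtain ⟨k, lam, G, hG⟩ := hS
  choose P hP using fun i => (G i).2
  refine ⟨k, lam, fun i => (P i).1, fun i => (P i).2, ?_⟩
  rintro ⟨p, hp⟩
  unfold wordSpan at hp
  induction hp using Submodule.span_induction with
  | mem x hx =>
    obtain ⟨w, hw, rfl⟩ := hx
    have := he w hw
    rw [dif_pos hw] at this
    rw [this, ← hG, Finset.sum_apply]
    refine Finset.sum_congr rfl fun i _ => ?_
    rw [Pi.smul_apply, smul_eq_mul, ← hP i, trWord, map_list_prod, List.map_map]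
    congr 4
    funext j
    simp
  | zero => 
    have : L ⟨0, Submodule.zero_mem _⟩ = 0 := map_zero L
    simpa using this
  | add x y hx hy h1 h2 =>
    have : L ⟨x + y, Submodule.add_mem _ hx hy⟩ = L ⟨x, hx⟩ + L ⟨y, hy⟩ := map_add L ⟨x, hx⟩ ⟨y, hy⟩
    rw [this, h1, h2]
    simp [mul_add, Finset.sum_add_distrib]
  | smul a x hx h1 =>
    have : L ⟨a • x, Submodule.smul_mem _ _ hx⟩ = a • L ⟨x, hx⟩ := map_smul L a ⟨x, hx⟩
    rw [this, h1]
    simp only [map_smul, Matrix.trace_smul, smul_eq_mul, Finset.mul_sum]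
    exact Finset.sum_congr rfl fun i _ => by ring
end

section
/- (Constrained truncated tracial moment problem, real case) Let d ∈ ℕ, let f₁, …, f_r ∈ ℝ⟨X⟩_d, and let L : ℝ⟨X⟩_d → ℝ be a tracial linear functional satisfying L(1) = 1 and L(f₁) = … = L(f_r) = 0. Then L lies in the linear span of the set of functionals φ_A, where A ranges over all tuples A ∈ Mₙ(ℝ)^g (over all n ∈ ℕ) satisfying tr(f₁(A)) = … = tr(f_r(A)) = 0. -/
lemma one_mem_wordSpan (F : Type*) [Field F] {g d : ℕ} :
    (1 : FreeAlgebra F (Fin g)) ∈ wordSpan F g d :=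
  Submodule.subset_span ⟨[], by simp, by simp⟩

open Fin.NatCast Fin.CommRing in
lemma cyc_prod_s12 {m : ℕ} {g : ℕ} (h : Fin (m+1) → Fin g → ℝ) (n : ℕ) (v : Fin n → Fin g)
    (a b : Fin (m+1)) :
    (((List.ofFn v).map (fun i => (Matrix.of (fun a b : Fin (m+1) =>
      if b = a + 1 then h a i else 0) : Matrix _ _ ℝ))).prod) a b =
    if b = a + (n : Fin (m+1)) then ∏ j : Fin n, h (a + ((j : ℕ) : Fin (m+1))) (v j) else 0 := by
  induction n generalizing a with
  | zero => simp [Matrix.one_apply, eq_comm]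
  | succ n ih =>
    rw [List.ofFn_succ, List.map_cons, List.prod_cons, Matrix.mul_apply]
    simp only [ih, Matrix.of_apply, ite_mul, zero_mul, Finset.sum_ite_eq', Finset.sum_ite_eq,
      Finset.mem_univ, if_true, Fin.prod_univ_succ]
    have e : ∀ k : ℕ, a + 1 + (k : Fin (m+1)) = a + ((k+1 : ℕ) : Fin (m+1)) := by
      intro k; push_cast; ring
    simp [e]

lemma fromBlocks_list_prod {ι κ α : Type} [Fintype ι] [DecidableEq ι] [Fintype κ] [DecidableEq κ]
    (A : α → Matrix ι ι ℝ) (B : α → Matrix κ κ ℝ) (u : List α) :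
    (u.map (fun i => Matrix.fromBlocks (A i) 0 0 (B i))).prod =
      Matrix.fromBlocks (u.map A).prod 0 0 (u.map B).prod := by
  induction u with
  | nil => simp
  | cons a u ih => simp [ih, Matrix.fromBlocks_multiply]

lemma blockDiagonal_list_prod {ι κ α : Type} [Fintype ι] [DecidableEq ι] [Fintype κ] [DecidableEq κ]
    (A : α → κ → Matrix ι ι ℝ) (u : List α) :
    (u.map (fun i => Matrix.blockDiagonal (A i))).prod =
      Matrix.blockDiagonal (fun k => (u.map (fun i => A i k)).prod) := by
  induction u with
  | nil => exact (Matrix.blockDiagonal_one (m := ι) (o := κ) (α := ℝ)).symm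
  | cons a u ih => simp [ih, Matrix.blockDiagonal_mul]

open Fin.NatCast Fin.CommRing in
lemma rot_inv {g m : ℕ} (c : List (Fin g) → ℝ) (hc : ∀ u v, c (u ++ v) = c (v ++ u))
    (v : Fin (m+1) → Fin g) (a : Fin (m+1)) :
    c (List.ofFn (fun j => v (j + a))) = c (List.ofFn v) := by
  have : List.ofFn (fun j => v (j + a)) = (List.ofFn v).rotate a := by
    apply List.ext_getElem
    · simp
    · intro i h1 h2
      rw [List.getElem_rotate, List.getElem_ofFn, List.getElem_ofFn]
      congr 1
      apply Fin.ext
      simp [Fin.val_add]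
  rw [this, List.rotate_eq_drop_append_take (by simp), hc, List.take_append_drop]

open Fin.NatCast Fin.CommRing in
lemma block_exists {g m : ℕ} (c : List (Fin g) → ℝ) (hc : ∀ u v, c (u ++ v) = c (v ++ u)) :
    ∃ B : Fin g → Matrix (Fin (m+1) × (Fin (m+1) → Fin g)) (Fin (m+1) × (Fin (m+1) → Fin g)) ℝ,
      ∀ u : List (Fin g), 1 ≤ u.length → u.length ≤ m + 1 →
        Matrix.trace (u.map B).prod = if u.length = m+1 then c u else 0 := by
  let γ : (Fin (m+1) → Fin g) → Fin (m+1) → ℝ := fun w a =>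
    if a = 0 then c (List.ofFn w) / (m+1) else 1
  have hγ : ∀ w, ∏ a, γ w a = c (List.ofFn w) / (m+1) := by
    intro w; simp [γ, Fin.prod_univ_succ]
  let h : (Fin (m+1) → Fin g) → Fin (m+1) → Fin g → ℝ := fun w a i => if w a = i then γ w a else 0
  refine ⟨fun i => Matrix.blockDiagonal fun w => Matrix.of fun a b => if b = a + 1 then h w a i else 0,
    ?_⟩
  intro u h1 h2
  rw [blockDiagonal_list_prod, Matrix.trace_blockDiagonal]
  obtain ⟨n, v, rfl⟩ : ∃ (n : ℕ) (v : Fin n → Fin g), u = List.ofFn v :=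
    ⟨u.length, u.get, by simp⟩
  simp only [List.length_ofFn] at h1 h2 ⊢
  simp only [Matrix.trace, Matrix.diag_apply, cyc_prod_s12]
  split_ifs with hn
  · subst hn
    simp only [Fin.natCast_self, add_zero, if_true, Fin.cast_val_eq_self]
    rw [Finset.sum_comm]
    have key : ∀ a : Fin (m+1), ∑ w, ∏ j, h w (a + j) (v j) = c (List.ofFn v) / (m+1) := by
      intro a
      rw [Finset.sum_eq_single (fun j => v (j + (-a)))]
      · have : ∀ j, h (fun j => v (j + (-a))) (a + j) (v j) = γ (fun j => v (j + (-a))) (a + j) := by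
          intro j; simp [h]
        simp only [this]
        rw [← rot_inv c hc v (-a), ← hγ]
        exact Equiv.prod_comp (Equiv.addLeft a) (γ (fun j => v (j + (-a))))
      · intro w _ hw
        by_contra hne
        apply hw
        funext j
        have := (Finset.prod_ne_zero_iff.mp hne) (j + -a) (Finset.mem_univ _)
        simp only [h] at this
        have h3 := (ite_ne_right_iff.mp this).1
        rw [← h3]; congr 1; ring
      · simp
    simp only [key]
    simp
    field_simp
  · apply Finset.sum_eq_zero
    intro w _
    apply Finset.sum_eq_zero
    intro a _
    rw [if_neg]
    intro hh
    have h0 : (n : Fin (m+1)) = 0 := by simpa using hh.symm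
    rw [Fin.natCast_eq_zero] at h0
    have := Nat.le_of_dvd (by omega) h0
    omega

lemma exists_tuple (g d : ℕ) : ∃ (ι : Type) (_ : Fintype ι) (_ : DecidableEq ι) (_ : Nonempty ι),
    ∀ c : List (Fin g) → ℝ, (∀ u v, c (u ++ v) = c (v ++ u)) →
    ∃ A : Fin g → Matrix ι ι ℝ, ∀ u : List (Fin g), 1 ≤ u.length → u.length ≤ d →
      Matrix.trace (u.map A).prod = c u := by
  induction d with
  | zero =>
    refine ⟨Unit, inferInstance, inferInstance, inferInstance, fun c _ => ⟨0, ?_⟩⟩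
    intro u h1 h2; omega
  | succ d ih =>
    obtain ⟨ι, _, _, _, H⟩ := ih
    refine ⟨ι ⊕ (Fin (d+1) × (Fin (d+1) → Fin g)), inferInstance, inferInstance,
      ⟨Sum.inl (Classical.arbitrary ι)⟩, ?_⟩
    intro c hc
    obtain ⟨A, hA⟩ := H c hc
    obtain ⟨B, hB⟩ := block_exists (m := d) (fun u => c u - Matrix.trace (u.map A).prod) (by
      intro u v
      simp only [hc u v, List.map_append, List.prod_append]
      rw [Matrix.trace_mul_comm])
    refine ⟨fun i => Matrix.fromBlocks (A i) 0 0 (B i), ?_⟩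
    intro u h1 h2
    have ht : ∀ (P : Matrix ι ι ℝ) (Q : Matrix (Fin (d+1) × (Fin (d+1) → Fin g)) (Fin (d+1) × (Fin (d+1) → Fin g)) ℝ),
        Matrix.trace (Matrix.fromBlocks P 0 0 Q) = Matrix.trace P + Matrix.trace Q := by
      intro P Q
      simp only [Matrix.trace, Matrix.diag_apply, Fintype.sum_sum_type,
        Matrix.fromBlocks_apply₁₁, Matrix.fromBlocks_apply₂₂]
    rw [fromBlocks_list_prod, ht, hB u h1 h2]
    split_ifs with h
    · ring
    · rw [hA u h1 (by omega), add_zero]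

/-- **Constrained truncated tracial moment problem, real case.** A tracial linear
functional `L` on `ℝ⟨X⟩_d` with `L 1 = 1` vanishing on `f₁, …, f_r` is a linear
combination of trace-evaluation functionals `p ↦ tr (p A)` at tuples `A` of real
matrices satisfying `tr (f₁ A) = ⋯ = tr (f_r A) = 0`. -/
theorem constrained_tracial_moment_problem_real (g d r : ℕ)
    (f : Fin r → wordSpan ℝ g d)
    (L : wordSpan ℝ g d →ₗ[ℝ] ℝ) (hL : IsTracial L)
    (hone : L ⟨1, one_mem_wordSpan ℝ⟩ = 1)
    (hf : ∀ i : Fin r, L (f i) = 0) :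
    ∃ (k : ℕ) (lam : Fin k → ℝ) (sz : Fin k → ℕ)
      (A : (ℓ : Fin k) → Fin g → Matrix (Fin (sz ℓ)) (Fin (sz ℓ)) ℝ),
      (∀ (ℓ : Fin k) (i : Fin r),
        Matrix.trace (FreeAlgebra.lift ℝ (A ℓ) ((f i : wordSpan ℝ g d) : FreeAlgebra ℝ (Fin g))) = 0) ∧
      ∀ p : wordSpan ℝ g d,
        L p = ∑ ℓ : Fin k,
          lam ℓ * Matrix.trace (FreeAlgebra.lift ℝ (A ℓ) (p : FreeAlgebra ℝ (Fin g))) := by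
  classical
  obtain ⟨ι, _, _, _, H⟩ := exists_tuple g d
  let N := Fintype.card ι
  have hN : (N : ℝ) ≠ 0 := by simp [N]
  let c : List (Fin g) → ℝ := fun u =>
    if h : u.length ≤ d then (N : ℝ) * L ⟨_, word_mem_wordSpan ℝ u h⟩ else 0
  obtain ⟨A, hA⟩ := H c (by
    intro u v
    by_cases h : u.length + v.length ≤ d
    · have h1 : (u ++ v).length ≤ d := by simpa using h
      have h2 : (v ++ u).length ≤ d := by simpa [add_comm] using h
      simp only [c, dif_pos h1, dif_pos h2]
      rw [hL u v h]
    · have h1 : ¬ (u ++ v).length ≤ d := by simpa using h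
      have h2 : ¬ (v ++ u).length ≤ d := by simpa [add_comm] using h
      simp only [c, dif_neg h1, dif_neg h2])
  let e : ι ≃ Fin N := Fintype.equivFin ι
  let A' : Fin g → Matrix (Fin N) (Fin N) ℝ := fun i => Matrix.reindexAlgEquiv ℝ ℝ e (A i)
  have htr : ∀ u : List (Fin g), Matrix.trace (u.map A').prod = Matrix.trace (u.map A).prod := by
    intro u
    have : (u.map A').prod = Matrix.reindexAlgEquiv ℝ ℝ e (u.map A).prod := by
      rw [map_list_prod, List.map_map]; rfl
    rw [this]
    simp only [Matrix.trace, Matrix.diag_apply, Matrix.reindexAlgEquiv_apply,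
      Matrix.reindex_apply, Matrix.submatrix_apply]
    exact Equiv.sum_comp e.symm (fun i => (u.map A).prod i i)
  let T : FreeAlgebra ℝ (Fin g) →ₗ[ℝ] ℝ :=
    (Matrix.traceLinearMap (Fin N) ℝ ℝ) ∘ₗ (FreeAlgebra.lift ℝ A').toLinearMap
  have key : ∀ p (hp : p ∈ wordSpan ℝ g d), (N : ℝ) * L ⟨p, hp⟩ = T p := by
    intro p hp
    unfold wordSpan at hp
    induction hp using Submodule.span_induction with
    | mem x hx =>
      obtain ⟨w, hw, rfl⟩ := hx
      have hT : T (w.map (FreeAlgebra.ι ℝ)).prod = Matrix.trace (w.map A').prod := by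
        simp only [T, LinearMap.comp_apply, AlgHom.toLinearMap_apply, map_list_prod,
          List.map_map, Matrix.traceLinearMap_apply]
        congr 3
        funext i
        simp
      rw [hT]
      rcases Nat.eq_zero_or_pos w.length with h0 | h0
      · rw [List.length_eq_zero_iff] at h0
        subst h0
        simp only [List.map_nil, List.prod_nil, Matrix.trace_one, Fintype.card_fin]
        rw [hone, mul_one]
      · rw [htr, hA w h0 hw]
        simp only [c, dif_pos hw]
    | zero =>
      rw [map_zero]
      exact mul_eq_zero_of_right _ (map_zero L)
    | add x y hx hy h1 h2 =>
      rw [map_add, ← h1, ← h2, ← mul_add]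
      congr 1
      exact map_add L ⟨x, hx⟩ ⟨y, hy⟩
    | smul a x hx h1 =>
      rw [map_smul, ← h1, smul_eq_mul, mul_left_comm]
      congr 1
      exact map_smul L a ⟨x, hx⟩
  refine ⟨1, fun _ => (N : ℝ)⁻¹, fun _ => N, fun _ => A', ?_, ?_⟩
  · intro _ i
    have := key _ (f i).2
    rw [Subtype.coe_eta, hf i, mul_zero] at this
    exact this.symm
  · intro p
    have := key _ p.2
    rw [Subtype.coe_eta] at this
    rw [Fin.sum_univ_one]
    change L p = (N : ℝ)⁻¹ * T p
    rw [← this, inv_mul_cancel_left₀ hN]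
end

section
/- (Constrained truncated tracial moment problem, complex case) Let d ∈ ℕ, let f₁, …, f_r ∈ ℂ⟨X⟩_d, and let L : ℂ⟨X⟩_d → ℂ be a tracial linear functional satisfying L(1) = 1 and L(f₁) = … = L(f_r) = 0. Then L lies in the linear span of the set of functionals φ_A, where A ranges over all tuples A ∈ Mₙ(ℂ)^g (over all n ∈ ℕ) satisfying tr(f₁(A)) = … = tr(f_r(A)) = 0. -/
lemma aux_blocks {g : ℕ} {ι κ : Type} [Fintype ι] [DecidableEq ι] [Fintype κ] [DecidableEq κ]
    (A : Fin g → Matrix ι ι ℂ) (B : Fin g → Matrix κ κ ℂ) (u : List (Fin g)) :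
    (u.map (fun x => Matrix.fromBlocks (A x) 0 0 (B x))).prod =
      Matrix.fromBlocks (u.map A).prod 0 0 (u.map B).prod := by
  induction u with
  | nil => simp [Matrix.fromBlocks_one]
  | cons x u ih => simp [ih, Matrix.fromBlocks_multiply]

/-- Words of length exactly `n`. -/
abbrev WV (g n : ℕ) : Type := {l : List (Fin g) // l.length = n}

noncomputable instance instFintypeWV (g n : ℕ) : Fintype (WV g n) :=
  Fintype.ofEquiv (List.Vector (Fin g) n) (Equiv.refl _)

/-- The cyclic block. -/
noncomputable def cycB (g n : ℕ) (a : List (Fin g) → ℂ) (x : Fin g) :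
    Matrix (WV g n × ZMod n) (WV g n × ZMod n) ℂ :=
  fun p q => if q.1.1 = p.1.1.rotate 1 ∧ q.2 = p.2 + 1 ∧ p.1.1.head? = some x then a p.1.1 else 0

lemma cycB_prod (g n : ℕ) [NeZero n] (a : List (Fin g) → ℂ)
    (ha : ∀ w : List (Fin g), w.length = n → a (w.rotate 1) = a w)
    (u : List (Fin g)) (hu : u.length ≤ n) (p q : WV g n × ZMod n) :
    (u.map (cycB g n a)).prod p q =
      if q.1.1 = p.1.1.rotate u.length ∧ q.2 = p.2 + u.length ∧ u = p.1.1.take u.length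
        then a p.1.1 ^ u.length else 0 := by
  induction u generalizing p with
  | nil =>
    simp only [List.map_nil, List.prod_nil, Matrix.one_apply, List.length_nil, List.rotate_zero,
      Nat.cast_zero, add_zero, List.take_zero, and_true, pow_zero]
    congr 1
    rw [Prod.ext_iff, Subtype.ext_iff, eq_comm (a := p.1.1), eq_comm (a := p.2)]
  | cons x u ih =>
    obtain ⟨⟨w, hw⟩, i⟩ := p
    have hu' : u.length + 1 ≤ n := by simpa using hu
    rw [List.map_cons, List.prod_cons, Matrix.mul_apply]
    rw [Finset.sum_eq_single (((⟨w.rotate 1, by simpa using hw⟩ : WV g n), i + 1))]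
    · rw [ih (by omega)]
      cases w with
      | nil => simp at hw; omega
      | cons y t =>
        have ht : u.length ≤ t.length := by simp at hw; omega
        have e1 : ((y :: t).rotate 1).take u.length = t.take u.length := by
          simp [List.take_append_of_le_length ht]
        have e2 : ((y :: t).rotate 1).rotate u.length = (y :: t).rotate (u.length + 1) := by
          rw [List.rotate_rotate, add_comm]
        simp only [cycB, e1, e2, ha _ hw, List.length_cons, List.take_succ_cons, List.cons.injEq,
          List.head?_cons, Option.some.injEq, true_and, Nat.cast_add, Nat.cast_one]
        have e3 : i + 1 + (u.length : ZMod n) = i + (u.length + 1) := by ring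
        rw [e3]
        by_cases hy : y = x
        · simp only [hy, if_true, true_and, mul_ite, mul_zero]
          rw [pow_succ']
        · have hy' : ¬ x = y := fun h => hy h.symm
          simp [hy, hy']
    · rintro ⟨⟨w', hw'⟩, j⟩ - hne
      have : ¬ (w' = w.rotate 1 ∧ j = i + 1) := by
        rintro ⟨rfl, rfl⟩
        exact hne rfl
      unfold cycB
      rw [if_neg, zero_mul]
      rintro ⟨h1, h2, -⟩
      exact this ⟨h1, h2⟩
    · simp

lemma cycB_trace_lt (g n : ℕ) [NeZero n] (a : List (Fin g) → ℂ)
    (ha : ∀ w : List (Fin g), w.length = n → a (w.rotate 1) = a w)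
    (u : List (Fin g)) (h0 : 0 < u.length) (hu : u.length < n) :
    (u.map (cycB g n a)).prod.trace = 0 := by
  rw [Matrix.trace]
  apply Finset.sum_eq_zero
  intro p _
  rw [Matrix.diag_apply, cycB_prod g n a ha u hu.le, if_neg]
  rintro ⟨-, h, -⟩
  have h' : (u.length : ZMod n) = 0 := by simpa using h
  rw [ZMod.natCast_eq_zero_iff] at h'
  exact absurd (Nat.le_of_dvd h0 h') (by omega)

lemma cycB_trace_eq (g n : ℕ) [NeZero n] (a : List (Fin g) → ℂ)
    (ha : ∀ w : List (Fin g), w.length = n → a (w.rotate 1) = a w)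
    (u : List (Fin g)) (hu : u.length = n) :
    (u.map (cycB g n a)).prod.trace = n * a u ^ n := by
  rw [Matrix.trace]
  simp only [Matrix.diag_apply]
  rw [Fintype.sum_prod_type, Finset.sum_eq_single (⟨u, hu⟩ : WV g n)]
  · have : ∀ i : ZMod n, (u.map (cycB g n a)).prod
        ((⟨u, hu⟩ : WV g n), i) ((⟨u, hu⟩ : WV g n), i)
        = a u ^ n := by
      intro i
      rw [cycB_prod g n a ha u hu.le, if_pos, hu]
      refine ⟨by simp, by simp [hu], by simp⟩
    simp [this, ZMod.card]
  · rintro ⟨w, hw⟩ - hne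
    apply Finset.sum_eq_zero
    intro i _
    rw [cycB_prod g n a ha u hu.le, if_neg]
    rintro ⟨-, -, h⟩
    apply hne
    apply Subtype.ext
    change w = u
    rw [h, hu]
    exact (List.take_of_length_le hw.le).symm
  · simp

lemma aux_main (g m : ℕ) : ∃ (ι : Type) (_ : Fintype ι) (_ : DecidableEq ι), Nonempty ι ∧
    ∀ ψ : List (Fin g) → ℂ, (∀ u v, ψ (u ++ v) = ψ (v ++ u)) →
      ∃ A : Fin g → Matrix ι ι ℂ, ∀ u : List (Fin g), 0 < u.length → u.length ≤ m →
        (u.map A).prod.trace = ψ u := by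
  induction m with
  | zero =>
    exact ⟨Unit, inferInstance, inferInstance, inferInstance, fun ψ _ => ⟨0, fun u h h' => by omega⟩⟩
  | succ m ih =>
    obtain ⟨ι, i1, i2, ⟨x0⟩, H⟩ := ih
    refine ⟨ι ⊕ (WV g (m + 1) × ZMod (m + 1)), inferInstance,
      Classical.decEq _, ⟨Sum.inl x0⟩, ?_⟩
    intro ψ hψ
    obtain ⟨A, hA⟩ := H ψ hψ
    have hroot : ∀ z : ℂ, ∃ y : ℂ, y ^ (m + 1) = z := fun z =>
      IsAlgClosed.exists_pow_nat_eq z (Nat.succ_pos m)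
    choose root hr using hroot
    let a : List (Fin g) → ℂ := fun w => root ((ψ w - (w.map A).prod.trace) / ((m + 1 : ℕ) : ℂ))
    have ha : ∀ w : List (Fin g), w.length = m + 1 → a (w.rotate 1) = a w := by
      intro w hw
      cases w with
      | nil => simp
      | cons y t =>
        have h1 := hψ t [y]
        have h2 : ((t ++ [y]).map A).prod.trace = ((y :: t).map A).prod.trace := by
          rw [List.map_append, List.prod_append, List.map_cons, List.prod_cons,
            Matrix.trace_mul_comm]
          simp
        simp only [a, List.rotate_cons_succ, List.rotate_zero, h2, h1, List.singleton_append]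
    refine ⟨fun x => Matrix.fromBlocks (A x) 0 0 (cycB g (m + 1) a x), ?_⟩
    intro u h0 hu
    have key := aux_blocks A (cycB g (m + 1) a) u
    have : (u.map fun x => Matrix.fromBlocks (A x) 0 0 (cycB g (m + 1) a x)).prod.trace
        = (u.map A).prod.trace + (u.map (cycB g (m + 1) a)).prod.trace := by
      rw [key]; simp [Matrix.trace, Fintype.sum_sum_type]
    have goal' : (u.map A).prod.trace + (u.map (cycB g (m + 1) a)).prod.trace = ψ u := by
      rcases Nat.lt_or_ge u.length (m + 1) with hlt | hge
      · rw [cycB_trace_lt g (m + 1) a ha u h0 hlt, hA u h0 (by omega), add_zero]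
      · rw [cycB_trace_eq g (m + 1) a ha u (by omega)]
        simp only [a, hr]
        have : ((m + 1 : ℕ) : ℂ) ≠ 0 := by exact_mod_cast Nat.succ_ne_zero m
        field_simp
        ring
    rw [← goal', ← this]
    convert rfl

/-- **Constrained truncated tracial moment problem, complex case.** A tracial linear
functional `L` on `ℂ⟨X⟩_d` with `L 1 = 1` vanishing on `f₁, …, f_r` is a linear
combination of trace-evaluation functionals `p ↦ tr (p A)` at tuples `A` of complex
matrices satisfying `tr (f₁ A) = ⋯ = tr (f_r A) = 0`. -/
theorem constrained_tracial_moment_problem_complex (g d r : ℕ)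
    (f : Fin r → wordSpan ℂ g d)
    (L : wordSpan ℂ g d →ₗ[ℂ] ℂ) (hL : IsTracial L)
    (hone : L ⟨1, one_mem_wordSpan ℂ⟩ = 1)
    (hf : ∀ i : Fin r, L (f i) = 0) :
    ∃ (k : ℕ) (lam : Fin k → ℂ) (sz : Fin k → ℕ)
      (A : (ℓ : Fin k) → Fin g → Matrix (Fin (sz ℓ)) (Fin (sz ℓ)) ℂ),
      (∀ (ℓ : Fin k) (i : Fin r),
        Matrix.trace (FreeAlgebra.lift ℂ (A ℓ) ((f i : wordSpan ℂ g d) : FreeAlgebra ℂ (Fin g))) = 0) ∧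
      ∀ p : wordSpan ℂ g d,
        L p = ∑ ℓ : Fin k,
          lam ℓ * Matrix.trace (FreeAlgebra.lift ℂ (A ℓ) (p : FreeAlgebra ℂ (Fin g))) := by
  classical
  obtain ⟨ι, i1, i2, i3, H⟩ := aux_main g d
  let N := Fintype.card ι
  have hN : (N : ℂ) ≠ 0 := by exact_mod_cast Fintype.card_ne_zero
  let ψ : List (Fin g) → ℂ := fun u => if h : u.length ≤ d then
    N * L ⟨(u.map (FreeAlgebra.ι ℂ)).prod, word_mem_wordSpan ℂ u h⟩ else 0
  have hψ : ∀ u v, ψ (u ++ v) = ψ (v ++ u) := by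
    intro u v
    by_cases h : u.length + v.length ≤ d
    · have h1 : (u ++ v).length ≤ d := by simpa using h
      have h2 : (v ++ u).length ≤ d := by simp; omega
      simp only [ψ, dif_pos h1, dif_pos h2]
      rw [hL u v h]
    · have h1 : ¬ (u ++ v).length ≤ d := by simpa using h
      have h2 : ¬ (v ++ u).length ≤ d := by simp; omega
      simp only [ψ, dif_neg h1, dif_neg h2]
  obtain ⟨A, hA⟩ := H ψ hψ
  let e : Matrix ι ι ℂ ≃ₐ[ℂ] Matrix (Fin N) (Fin N) ℂ :=
    Matrix.reindexAlgEquiv ℂ ℂ (Fintype.equivFin ι)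
  have htr : ∀ M : Matrix ι ι ℂ, (e M).trace = M.trace := by
    intro M
    simp only [e, Matrix.trace, Matrix.diag_apply, Matrix.coe_reindexAlgEquiv,
      Matrix.reindex_apply, Matrix.submatrix_apply]
    exact Equiv.sum_comp (Fintype.equivFin ι).symm (fun i => M i i)
  let B : Fin g → Matrix (Fin N) (Fin N) ℂ := fun x => e (A x)
  have key : ∀ p : wordSpan ℂ g d,
      Matrix.trace (FreeAlgebra.lift ℂ B (p : FreeAlgebra ℂ (Fin g))) = N * L p := by
    rintro ⟨x, hx⟩
    refine Submodule.span_induction (p := fun x hx =>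
      Matrix.trace (FreeAlgebra.lift ℂ B x) = N * L ⟨x, hx⟩) ?_ ?_ ?_ ?_ hx
    · rintro x ⟨w, hw, rfl⟩
      by_cases h0 : w = []
      · subst h0
        simp only [List.map_nil, List.prod_nil, map_one, Matrix.trace_one, Fintype.card_fin]
        rw [hone, mul_one]
      · have h1 := hA w (List.length_pos_of_ne_nil h0) hw
        simp only [ψ, dif_pos hw] at h1
        rw [← h1, ← htr, map_list_prod, map_list_prod, List.map_map, List.map_map]
        congr 3
        funext x
        simp [B]
    · have : (⟨0, Submodule.zero_mem _⟩ : wordSpan ℂ g d) = 0 := rfl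
      erw [this]
      simp
    · intro x y hx hy h1 h2
      have : (⟨x + y, Submodule.add_mem _ hx hy⟩ : wordSpan ℂ g d) = ⟨x, hx⟩ + ⟨y, hy⟩ := rfl
      erw [this]
      rw [map_add, map_add, Matrix.trace_add, h1, h2, mul_add]
    · intro c x hx h1
      have : (⟨c • x, Submodule.smul_mem _ c hx⟩ : wordSpan ℂ g d) = c • ⟨x, hx⟩ := rfl
      erw [this]
      rw [map_smul, map_smul, Matrix.trace_smul, h1, smul_eq_mul, smul_eq_mul]
      ring
  refine ⟨1, fun _ => (N : ℂ)⁻¹, fun _ => N, fun _ => B, ?_, ?_⟩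
  · intro _ i
    rw [key, hf, mul_zero]
  · intro p
    simp only [Finset.univ_unique, Finset.sum_singleton]
    rw [key, inv_mul_cancel_left₀ hN]
end
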